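/- arXiv:2206.10723 — 2 statements merged into one kernel-verified Lean document; each statement's English description precedes it below -/
import Mathlib

section
/- Let d ≥ 2 and let K : ℝ^d → ℝ be continuous, isotropic, positive definite, whose radial profile is regularly varying (at infinity) with index α ∈ [0,1]; in the case α = 1 assume moreover K(x) ∼ x^{−1} (log x)^{−γ} as x → ∞ for some γ < 1. Let r : (0,∞) → [0,∞) satisfy r(R) = R^{o(1)} as R → ∞ (i.e. log(max(r(R),2))/log R → 0). Then, as R → ∞, Cap_K([0,R] × [0,r(R)]^{d−1}) ∼ Cap_K([0,R] × {0}^{d−1}). -/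
open Filter MeasureTheory

/-- A function `L` is slowly varying (at infinity) if it is continuous and strictly positive
on `(0,∞)` and `L(ax)/L(x) → 1` as `x → ∞` for every `a > 0`. -/
def SlowlyVarying (L : ℝ → ℝ) : Prop :=
  ContinuousOn L (Set.Ioi 0) ∧ (∀ x : ℝ, 0 < x → 0 < L x) ∧
    ∀ a : ℝ, 0 < a → Tendsto (fun x => L (a * x) / L x) atTop (nhds 1)

/-- A continuous function `h` on `(0,∞)` is regularly varying (at infinity) with index `α`
if `h(x) ∼ x^(-α) L(x)` as `x → ∞` for some slowly varying `L`. -/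
def RegularlyVarying (h : ℝ → ℝ) (α : ℝ) : Prop :=
  ContinuousOn h (Set.Ioi 0) ∧
    ∃ L : ℝ → ℝ, SlowlyVarying L ∧
      Tendsto (fun x => h x / (x ^ (-α) * L x)) atTop (nhds 1)

/-- A kernel `K : ℝ^d → ℝ` is positive definite if all quadratic forms
`∑ i j, c i * c j * K (x i - x j)` are nonnegative. -/
def IsPosDefKernel {d : ℕ} (K : EuclideanSpace ℝ (Fin d) → ℝ) : Prop :=
  ∀ (n : ℕ) (x : Fin n → EuclideanSpace ℝ (Fin d)) (c : Fin n → ℝ),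
    0 ≤ ∑ i : Fin n, ∑ j : Fin n, c i * c j * K (x i - x j)

/-- The energy `E_K(μ) = ∫∫ K(x-y) dμ(x) dμ(y)`. -/
noncomputable def energyE {d : ℕ} (K : EuclideanSpace ℝ (Fin d) → ℝ)
    (μ : Measure (EuclideanSpace ℝ (Fin d))) : ℝ :=
  ∫ x, ∫ y, K (x - y) ∂μ ∂μ

/-- The capacity of `D` with respect to `K`: the reciprocal of the minimal energy of a
Borel probability measure supported on `D`. -/
noncomputable def capacityE {d : ℕ} (K : EuclideanSpace ℝ (Fin d) → ℝ)
    (D : Set (EuclideanSpace ℝ (Fin d))) : ℝ :=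
  (sInf {e : ℝ | ∃ μ : Measure (EuclideanSpace ℝ (Fin d)),
      IsProbabilityMeasure μ ∧ μ Dᶜ = 0 ∧ e = energyE K μ})⁻¹

/-- The tube `[0,R] × [0,ρ]^{d-1} ⊂ ℝ^d`. -/
def tubeSet (d : ℕ) (R ρ : ℝ) : Set (EuclideanSpace ℝ (Fin d)) :=
  {x | ∀ i : Fin d, if (i : ℕ) = 0 then x i ∈ Set.Icc 0 R else x i ∈ Set.Icc 0 ρ}

/-- The segment `[0,R] × {0}^{d-1} ⊂ ℝ^d`. -/
def segmentSet (d : ℕ) (R : ℝ) : Set (EuclideanSpace ℝ (Fin d)) :=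
  {x | ∀ i : Fin d, if (i : ℕ) = 0 then x i ∈ Set.Icc 0 R else x i = 0}


section PartOne

variable {d : ℕ}

lemma pd_fintype {K : EuclideanSpace ℝ (Fin d) → ℝ} (hpd : IsPosDefKernel K)
    {ι : Type} [Fintype ι] (x : ι → EuclideanSpace ℝ (Fin d)) (c : ι → ℝ) :
    0 ≤ ∑ i, ∑ j, c i * c j * K (x i - x j) := by
  classical
  let e := Fintype.equivFin ι
  have h := hpd (Fintype.card ι) (x ∘ e.symm) (c ∘ e.symm)
  simp only [Function.comp_apply] at h
  rw [Equiv.sum_comp e.symm (fun i => ∑ j, c i * c (e.symm j) * K (x i - x (e.symm j)))] at h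
  refine h.trans_eq (Finset.sum_congr rfl fun i _ => ?_)
  exact Equiv.sum_comp e.symm (fun j => c i * c j * K (x i - x j))

lemma pd_bound {K : EuclideanSpace ℝ (Fin d) → ℝ} (hpd : IsPosDefKernel K)
    (hsym : ∀ x, K (-x) = K x) (x : EuclideanSpace ℝ (Fin d)) : |K x| ≤ K 0 := by
  have h1 := hpd 2 ![x, 0] ![1, 1]
  have h2 := hpd 2 ![x, 0] ![1, -1]
  simp [Fin.sum_univ_two, hsym] at h1 h2
  rw [abs_le]; constructor <;> linarith

lemma integrable_bdd {Ω : Type*} [MeasurableSpace Ω] (μ : Measure Ω) [IsFiniteMeasure μ]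
    (f : Ω → ℝ) (hf : Measurable f) (B : ℝ) (hB : ∀ x, |f x| ≤ B) : Integrable f μ :=
  Integrable.of_bound hf.aestronglyMeasurable B (Eventually.of_forall fun x => by
    simpa [Real.norm_eq_abs] using hB x)

lemma energy_nonneg {K : EuclideanSpace ℝ (Fin d) → ℝ} (hK : Continuous K)
    (B : ℝ) (hB : ∀ x, |K x| ≤ B) (hpd : IsPosDefKernel K)
    (μ : Measure (EuclideanSpace ℝ (Fin d))) [IsProbabilityMeasure μ] :
    0 ≤ ∫ x, ∫ y, K (x - y) ∂μ ∂μ := by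
  set I := ∫ x, ∫ y, K (x - y) ∂μ ∂μ with hI
  have key : ∀ n : ℕ, 0 ≤ (n : ℝ) * K 0 + (n : ℝ) * (n - 1) * I := by
    intro n
    let P : Measure (Fin n → EuclideanSpace ℝ (Fin d)) := Measure.pi (fun _ => μ)
    have hint : ∀ i j : Fin n, Integrable (fun ω : Fin n → EuclideanSpace ℝ (Fin d) =>
        K (ω i - ω j)) P := fun i j =>
      integrable_bdd _ _ (hK.measurable.comp ((measurable_pi_apply i).sub (measurable_pi_apply j)))
        B (fun _ => hB _)
    have h0 : 0 ≤ ∫ ω, ∑ i : Fin n, ∑ j : Fin n, K (ω i - ω j) ∂P := by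
      refine integral_nonneg fun ω => ?_
      have := hpd n ω (fun _ => 1)
      simpa using this
    rw [integral_finsetSum _ (fun i _ => integrable_finsetSum _ (fun j _ => hint i j))] at h0
    have hind : ProbabilityTheory.iIndepFun (fun (i : Fin n)
        (ω : Fin n → EuclideanSpace ℝ (Fin d)) => ω i) P := by
      have := ProbabilityTheory.iIndepFun_pi (μ := fun _ : Fin n => μ)
        (X := fun _ x => x) (fun _ => aemeasurable_id)
      simpa using this
    have hmap : ∀ i : Fin n, P.map (fun ω => ω i) = μ := fun i =>
      (measurePreserving_eval (fun _ : Fin n => μ) i).map_eq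
    have hoff : ∀ i j : Fin n, i ≠ j → ∫ ω, K (ω i - ω j) ∂P = I := by
      intro i j hij
      have h1 := hind.indepFun hij
      rw [ProbabilityTheory.indepFun_iff_map_prod_eq_prod_map_map
        (measurable_pi_apply i).aemeasurable (measurable_pi_apply j).aemeasurable,
        hmap, hmap] at h1
      have hm : Measurable (fun p : EuclideanSpace ℝ (Fin d) × EuclideanSpace ℝ (Fin d) =>
        K (p.1 - p.2)) := hK.measurable.comp (measurable_fst.sub measurable_snd)
      have h2 : ∫ ω, K (ω i - ω j) ∂P = ∫ p, K (p.1 - p.2) ∂(P.map (fun ω => (ω i, ω j))) := by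
        rw [integral_map ((measurable_pi_apply i).prodMk (measurable_pi_apply j)).aemeasurable
          hm.aestronglyMeasurable]
      rw [h2, h1, integral_prod _ (integrable_bdd _ _ hm B (fun _ => hB _))]
    have hsum : ∀ i : Fin n, ∫ ω, ∑ j, K (ω i - ω j) ∂P = K 0 + ((n : ℝ) - 1) * I := by
      intro i
      rw [integral_finsetSum _ (fun j _ => hint i j), ← Finset.add_sum_erase _ _ (Finset.mem_univ i),
        Finset.sum_congr rfl (fun j hj => hoff i j (Finset.ne_of_mem_erase hj).symm)]
      have hn : 1 ≤ n := by have := i.2; omega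
      simp [Finset.card_erase_of_mem, P, Nat.cast_sub hn]
    rw [Finset.sum_congr rfl (fun i _ => hsum i)] at h0
    simp at h0
    nlinarith [h0]
  by_contra hneg
  push Not at hneg
  obtain ⟨n, hn⟩ := exists_nat_gt (1 + |K 0| / (-I))
  have hnp : (0 : ℝ) < n := by
    have : 0 ≤ |K 0| / (-I) := div_nonneg (abs_nonneg _) (by linarith)
    linarith
  have h3 : |K 0| < (n - 1) * (-I) := by
    have : |K 0| / (-I) < n - 1 := by linarith
    rwa [div_lt_iff₀ (by linarith)] at this
  have h4 := key n
  have h5 : 0 ≤ K 0 + (n - 1) * I := by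
    by_contra h
    push Not at h
    nlinarith
  have := le_abs_self (K 0)
  linarith

lemma energy_shift {K : EuclideanSpace ℝ (Fin d) → ℝ} (hK : Continuous K)
    (hpd : IsPosDefKernel K) (hsym : ∀ x, K (-x) = K x)
    (μ : Measure (EuclideanSpace ℝ (Fin d))) [IsProbabilityMeasure μ]
    (v : EuclideanSpace ℝ (Fin d)) :
    ∫ x, ∫ y, K (x - y + v) ∂μ ∂μ ≤ ∫ x, ∫ y, K (x - y) ∂μ ∂μ := by
  have hB := pd_bound hpd hsym
  let K2 : EuclideanSpace ℝ (Fin d) → ℝ := fun z => 2 * K z - K (z + v) - K (z - v)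
  have hK2c : Continuous K2 := by fun_prop
  have hK2B : ∀ x, |K2 x| ≤ 4 * K 0 := by
    intro x
    have h1 := abs_le.1 (hB x)
    have h2 := abs_le.1 (hB (x + v))
    have h3 := abs_le.1 (hB (x - v))
    rw [abs_le]; constructor <;> simp only [K2] <;> linarith
  have hK2p : IsPosDefKernel K2 := by
    intro n x c
    have h := pd_fintype hpd (ι := Fin n ⊕ Fin n) (Sum.elim x (fun i => x i + v))
      (Sum.elim c (fun i => - c i))
    simp only [Fintype.sum_sum_type, Sum.elim_inl, Sum.elim_inr] at h
    rw [← Finset.sum_add_distrib] at h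
    refine h.trans_eq (Finset.sum_congr rfl fun i _ => ?_)
    rw [← Finset.sum_add_distrib, ← Finset.sum_add_distrib, ← Finset.sum_add_distrib]
    refine Finset.sum_congr rfl fun j _ => ?_
    have e1 : x i - (x j + v) = x i - x j - v := by abel
    have e2 : x i + v - x j = x i - x j + v := by abel
    have e3 : x i + v - (x j + v) = x i - x j := by abel
    rw [e1, e2, e3]; simp only [K2]; ring
  have h := energy_nonneg hK2c _ hK2B hK2p μ
  have hm : ∀ w : EuclideanSpace ℝ (Fin d),
      Measurable (fun p : EuclideanSpace ℝ (Fin d) × EuclideanSpace ℝ (Fin d) =>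
        K (p.1 - p.2 + w)) := fun w =>
    hK.measurable.comp ((measurable_fst.sub measurable_snd).add_const w)
  have hi : ∀ w, Integrable (fun p : EuclideanSpace ℝ (Fin d) × EuclideanSpace ℝ (Fin d) =>
        K (p.1 - p.2 + w)) (μ.prod μ) := fun w => integrable_bdd _ _ (hm w) _ (fun _ => hB _)
  have hp : ∀ w, ∫ x, ∫ y, K (x - y + w) ∂μ ∂μ = ∫ p, K (p.1 - p.2 + w) ∂(μ.prod μ) := fun w =>
    (integral_prod _ (hi w)).symm
  have h0 := hp 0
  simp only [add_zero] at h0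
  have hi0 := hi 0
  simp only [add_zero] at hi0
  have hneg : ∫ p, K (p.1 - p.2 + -v) ∂(μ.prod μ) = ∫ p, K (p.1 - p.2 + v) ∂(μ.prod μ) := by
    rw [← integral_prod_swap]
    refine integral_congr_ae (Eventually.of_forall fun p => ?_)
    simp only [Prod.fst_swap, Prod.snd_swap]
    rw [← hsym]; congr 1; abel
  have hE : ∫ x, ∫ y, K2 (x - y) ∂μ ∂μ = 2 * ∫ p, K (p.1 - p.2) ∂(μ.prod μ)
      - ∫ p, K (p.1 - p.2 + v) ∂(μ.prod μ) - ∫ p, K (p.1 - p.2 + -v) ∂(μ.prod μ) := by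
    have hm2 : Measurable (fun p : EuclideanSpace ℝ (Fin d) × EuclideanSpace ℝ (Fin d) =>
        K2 (p.1 - p.2)) := hK2c.measurable.comp (measurable_fst.sub measurable_snd)
    have hsub : Integrable (fun p : EuclideanSpace ℝ (Fin d) × EuclideanSpace ℝ (Fin d) =>
        2 * K (p.1 - p.2) - K (p.1 - p.2 + v)) (μ.prod μ) := (hi0.const_mul 2).sub (hi v)
    rw [← integral_const_mul, ← integral_sub (hi0.const_mul 2) (hi v),
      ← integral_sub hsub (hi (-v)),
      ← integral_prod (fun p : EuclideanSpace ℝ (Fin d) × EuclideanSpace ℝ (Fin d) =>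
        K2 (p.1 - p.2)) (integrable_bdd _ _ hm2 _ (fun _ => hK2B _))]
    refine integral_congr_ae (Eventually.of_forall fun p => ?_)
    simp [K2, sub_eq_add_neg]
  rw [hE, hneg] at h
  rw [h0, hp v]
  linarith

lemma energy_avg {K : EuclideanSpace ℝ (Fin d) → ℝ} (hK : Continuous K)
    (hpd : IsPosDefKernel K) (hsym : ∀ x, K (-x) = K x)
    (μ : Measure (EuclideanSpace ℝ (Fin d))) [IsProbabilityMeasure μ]
    {Ω : Type*} [MeasurableSpace Ω] (σ : Measure Ω) [IsProbabilityMeasure σ]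
    (f : Ω → EuclideanSpace ℝ (Fin d)) (hf : Measurable f) :
    ∫ p, ∫ ω, K (p.1 - p.2 + f ω) ∂σ ∂(μ.prod μ) ≤ energyE K μ := by
  have hB := pd_bound hpd hsym
  have hm : Measurable (fun q : (EuclideanSpace ℝ (Fin d) × EuclideanSpace ℝ (Fin d)) × Ω =>
        K (q.1.1 - q.1.2 + f q.2)) := hK.measurable.comp
    (((measurable_fst.comp measurable_fst).sub (measurable_snd.comp measurable_fst)).add
      (hf.comp measurable_snd))
  have hi : Integrable (Function.uncurry (fun (p : EuclideanSpace ℝ (Fin d) ×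
      EuclideanSpace ℝ (Fin d)) (ω : Ω) => K (p.1 - p.2 + f ω))) ((μ.prod μ).prod σ) :=
    integrable_bdd _ _ hm _ (fun _ => hB _)
  rw [integral_integral_swap hi]
  have hle : ∀ ω, ∫ p, K (p.1 - p.2 + f ω) ∂(μ.prod μ) ≤ energyE K μ := by
    intro ω
    have hm' : Measurable (fun p : EuclideanSpace ℝ (Fin d) × EuclideanSpace ℝ (Fin d) =>
        K (p.1 - p.2 + f ω)) :=
      hK.measurable.comp ((measurable_fst.sub measurable_snd).add_const _)
    rw [integral_prod _ (integrable_bdd _ _ hm' _ (fun _ => hB _))]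
    exact energy_shift hK hpd hsym μ (f ω)
  calc _ ≤ ∫ _ω, energyE K μ ∂σ := integral_mono hi.integral_prod_right (integrable_const _) hle
    _ = _ := by simp

end PartOne

section PartTwo

variable {d : ℕ}

noncomputable abbrev unifM : Measure ℝ := volume.restrict (Set.Icc (0:ℝ) 1)

instance : IsProbabilityMeasure unifM := ⟨by simp [unifM]⟩

noncomputable abbrev minE (K : EuclideanSpace ℝ (Fin d) → ℝ)
    (D : Set (EuclideanSpace ℝ (Fin d))) : ℝ :=
  sInf {e : ℝ | ∃ μ : Measure (EuclideanSpace ℝ (Fin d)),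
      IsProbabilityMeasure μ ∧ μ Dᶜ = 0 ∧ e = energyE K μ}

lemma minE_bdd {K : EuclideanSpace ℝ (Fin d) → ℝ} (hK : Continuous K)
    (hpd : IsPosDefKernel K) (hsym : ∀ x, K (-x) = K x) (D : Set (EuclideanSpace ℝ (Fin d))) :
    BddBelow {e : ℝ | ∃ μ : Measure (EuclideanSpace ℝ (Fin d)),
      IsProbabilityMeasure μ ∧ μ Dᶜ = 0 ∧ e = energyE K μ} := by
  refine ⟨0, ?_⟩
  rintro e ⟨μ, hμ, -, rfl⟩
  exact energy_nonneg hK _ (pd_bound hpd hsym) hpd μ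

lemma meas_aux {K : EuclideanSpace ℝ (Fin d) → ℝ} (hK : Continuous K) (i0 : Fin d)
    (c h : ℝ) (e : EuclideanSpace ℝ (Fin d)) :
    Measurable (fun q : (EuclideanSpace ℝ (Fin d) × EuclideanSpace ℝ (Fin d)) × (ℝ × ℝ) =>
      K ((c * (q.1.1 i0 - q.1.2 i0 + h * (q.2.1 - q.2.2))) • e)) := by
  apply Continuous.measurable
  fun_prop

lemma integral_comm4 {X S : Type*} [MeasurableSpace X] [MeasurableSpace S]
    (μ : Measure X) (σ : Measure S) [IsProbabilityMeasure μ] [IsProbabilityMeasure σ]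
    (F : (X × X) × (S × S) → ℝ) (hF : Measurable F) (B : ℝ) (hB : ∀ q, |F q| ≤ B) :
    ∫ q : (X × S) × (X × S), F ((q.1.1, q.2.1), (q.1.2, q.2.2)) ∂((μ.prod σ).prod (μ.prod σ)) =
      ∫ q, F q ∂((μ.prod μ).prod (σ.prod σ)) := by
  have hm1 : Measurable (fun q : (X × S) × (X × S) => F ((q.1.1, q.2.1), (q.1.2, q.2.2))) :=
    hF.comp (by fun_prop)
  have hi1 := integrable_bdd ((μ.prod σ).prod (μ.prod σ)) _ hm1 B (fun _ => hB _)
  have hi2 := integrable_bdd ((μ.prod μ).prod (σ.prod σ)) _ hF B hB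
  rw [integral_prod _ hi1, integral_prod _ hi1.integral_prod_left, integral_prod _ hi2,
    integral_prod _ hi2.integral_prod_left]
  refine integral_congr_ae (Eventually.of_forall fun x => ?_)
  have e1 : ∀ s, ∫ q : X × S, F ((x, q.1), (s, q.2)) ∂(μ.prod σ) =
      ∫ y, ∫ t, F ((x, y), (s, t)) ∂σ ∂μ := fun s =>
    integral_prod _ (integrable_bdd _ _ (hF.comp (by fun_prop)) B (fun _ => hB _))
  have e2 : ∀ y, ∫ ω : S × S, F ((x, y), ω) ∂(σ.prod σ) =
      ∫ s, ∫ t, F ((x, y), (s, t)) ∂σ ∂σ := fun s =>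
    integral_prod _ (integrable_bdd _ _ (hF.comp (by fun_prop)) B (fun _ => hB _))
  simp only [e1, e2]
  refine integral_integral_swap ?_
  have hm3 : Measurable (fun q : (S × X) × S => F ((x, q.1.2), (q.1.1, q.2))) :=
    hF.comp (by fun_prop)
  exact (integrable_bdd ((σ.prod μ).prod σ) _ hm3 B (fun _ => hB _)).integral_prod_left

lemma seg_le {K : EuclideanSpace ℝ (Fin d) → ℝ} (hK : Continuous K)
    (hpd : IsPosDefKernel K) (hsym : ∀ x, K (-x) = K x) (i0 : Fin d) (hi0 : (i0 : ℕ) = 0)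
    (R ρ c h : ℝ) (hc : 0 < c) (hh : 0 < h) (hcR : c * (R + h) = R)
    (μ : Measure (EuclideanSpace ℝ (Fin d))) [IsProbabilityMeasure μ]
    (hμ : μ (tubeSet d R ρ)ᶜ = 0) :
    minE K (segmentSet d R) ≤ ∫ p, ∫ ω, K ((c * (p.1 i0 - p.2 i0 + h * (ω.1 - ω.2))) •
      EuclideanSpace.single i0 (1:ℝ)) ∂(unifM.prod unifM) ∂(μ.prod μ) := by
  have hB := pd_bound hpd hsym
  set e := EuclideanSpace.single i0 (1:ℝ) with he
  have hcoord : Measurable (fun x : EuclideanSpace ℝ (Fin d) => x i0) := by fun_prop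
  let φ : EuclideanSpace ℝ (Fin d) × ℝ → EuclideanSpace ℝ (Fin d) :=
    fun q => (c * (q.1 i0 + h * q.2)) • e
  have hφ : Measurable φ := by
    refine Measurable.smul_const ?_ e
    exact ((hcoord.comp measurable_fst).add (measurable_snd.const_mul h)).const_mul c
  let ν := (μ.prod unifM).map φ
  have hνp : IsProbabilityMeasure ν := Measure.isProbabilityMeasure_map hφ.aemeasurable
  have hsegm : MeasurableSet (segmentSet d R) := by
    have : segmentSet d R = ⋂ i : Fin d, {x : EuclideanSpace ℝ (Fin d) |
      if (i : ℕ) = 0 then x i ∈ Set.Icc 0 R else x i = 0} := by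
      ext x; simp [segmentSet]
    rw [this]
    refine MeasurableSet.iInter fun i => ?_
    have hm : Measurable (fun x : EuclideanSpace ℝ (Fin d) => x i) := by fun_prop
    split_ifs
    · exact hm measurableSet_Icc
    · exact hm (measurableSet_singleton 0)
  have hνs : ν (segmentSet d R)ᶜ = 0 := by
    rw [Measure.map_apply hφ hsegm.compl]
    have h1 : ∀ᵐ q ∂(μ.prod unifM), q.1 ∈ tubeSet d R ρ :=
      Measure.quasiMeasurePreserving_fst.ae (p := fun x => x ∈ tubeSet d R ρ) hμ
    have h2 : ∀ᵐ q ∂(μ.prod unifM), q.2 ∈ Set.Icc (0:ℝ) 1 :=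
      Measure.quasiMeasurePreserving_snd.ae (p := fun x => x ∈ Set.Icc (0:ℝ) 1)
        (ae_restrict_mem measurableSet_Icc)
    have h3 : ∀ᵐ q ∂(μ.prod unifM), φ q ∈ segmentSet d R := by
      filter_upwards [h1, h2] with q hq1 hq2 i
      have hq := hq1 i0
      rw [if_pos hi0] at hq
      by_cases hi : (i : ℕ) = 0
      · have : i = i0 := Fin.ext (by omega)
        subst this
        rw [if_pos hi]
        have hval : φ q i = c * (q.1 i + h * q.2) := by simp [φ, he]
        rw [hval]
        have h4 : 0 ≤ h * q.2 := mul_nonneg hh.le hq2.1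
        have h5 : h * q.2 ≤ h := by nlinarith [hq2.2]
        constructor
        · exact mul_nonneg hc.le (add_nonneg hq.1 h4)
        · refine le_of_le_of_eq ?_ hcR
          exact mul_le_mul_of_nonneg_left (by linarith [hq.2]) hc.le
      · rw [if_neg hi]
        have : i ≠ i0 := fun h => hi (by rw [h]; exact hi0)
        simp [φ, he, this]
    exact h3
  have hle : minE K (segmentSet d R) ≤ energyE K ν :=
    csInf_le (minE_bdd hK hpd hsym _) ⟨ν, hνp, hνs, rfl⟩
  refine hle.trans_eq ?_
  have hmF : Measurable (fun q : (EuclideanSpace ℝ (Fin d) × EuclideanSpace ℝ (Fin d)) × (ℝ × ℝ) =>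
      K ((c * (q.1.1 i0 - q.1.2 i0 + h * (q.2.1 - q.2.2))) • e)) :=
    meas_aux hK i0 c h e
  rw [← integral_prod (fun q : (EuclideanSpace ℝ (Fin d) × EuclideanSpace ℝ (Fin d)) × (ℝ × ℝ) =>
      K ((c * (q.1.1 i0 - q.1.2 i0 + h * (q.2.1 - q.2.2))) • e))
      (integrable_bdd _ _ hmF _ (fun _ => hB _))]
  have hmd : Measurable (fun p : EuclideanSpace ℝ (Fin d) × EuclideanSpace ℝ (Fin d) =>
        K (p.1 - p.2)) := hK.measurable.comp (measurable_fst.sub measurable_snd)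
  have hE : energyE K ν = ∫ p, K (p.1 - p.2) ∂(ν.prod ν) :=
    (integral_prod _ (integrable_bdd _ _ hmd _ (fun _ => hB _))).symm
  rw [hE, Measure.map_prod_map _ _ hφ hφ,
    integral_map (hφ.prodMap hφ).aemeasurable hmd.aestronglyMeasurable]
  rw [← integral_comm4 μ unifM _ hmF _ (fun _ => hB _)]
  refine integral_congr_ae (Eventually.of_forall fun q => ?_)
  simp only [Prod.map, φ, ← sub_smul]
  congr 2
  ring

lemma noise_le (N : ℝ → ℝ) (hN : Measurable N) (hN0 : ∀ u, 0 ≤ N u) (B : ℝ)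
    (hNB : ∀ u, |N u| ≤ B) (hNi : Integrable N) (w h : ℝ) (hh : 0 < h) :
    ∫ ω, N (w + h * (ω.1 - ω.2)) ∂(unifM.prod unifM) ≤ h⁻¹ * ∫ u, N u := by
  have hm : Measurable (fun ω : ℝ × ℝ => N (w + h * (ω.1 - ω.2))) :=
    hN.comp (((measurable_fst.sub measurable_snd).const_mul h).const_add w)
  have hi := integrable_bdd (unifM.prod unifM) _ hm B (fun _ => hNB _)
  rw [integral_prod _ hi]
  have hin : ∀ s : ℝ, ∫ t, N (w + h * (s - t)) ∂unifM ≤ h⁻¹ * ∫ u, N u := by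
    intro s
    have hi2 : Integrable (fun t => N (w + h * (s - t))) := by
      have h1 : Integrable (fun t => N (w + h * t)) :=
        (hNi.comp_add_left w).comp_mul_left' hh.ne'
      exact h1.comp_sub_left s
    calc ∫ t, N (w + h * (s - t)) ∂unifM ≤ ∫ t, N (w + h * (s - t)) :=
          setIntegral_le_integral hi2 (Eventually.of_forall fun t => hN0 _)
      _ = ∫ t, N (w + h * t) := integral_sub_left_eq_self (fun t => N (w + h * t)) _ s
      _ = h⁻¹ * ∫ t, N (w + t) := by
          rw [Measure.integral_comp_mul_left (fun t => N (w + t)) h, abs_of_pos (inv_pos.2 hh)]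
          simp
      _ = _ := by rw [integral_add_left_eq_self]
  calc _ ≤ ∫ _s, (h⁻¹ * ∫ u, N u) ∂unifM :=
        integral_mono hi.integral_prod_left (integrable_const _) hin
    _ = _ := by simp

lemma tube_ae (R ρ : ℝ) (i0 : Fin d) (hi0 : (i0 : ℕ) = 0)
    (μ : Measure (EuclideanSpace ℝ (Fin d))) [IsProbabilityMeasure μ]
    (hμ : μ (tubeSet d R ρ)ᶜ = 0) :
    ∀ᵐ p ∂(μ.prod μ), |p.1 i0 - p.2 i0| ≤ R ∧ ∀ i ≠ i0, |p.1 i - p.2 i| ≤ ρ := by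
  have h1 : ∀ᵐ q ∂(μ.prod μ), q.1 ∈ tubeSet d R ρ :=
      Measure.quasiMeasurePreserving_fst.ae (p := fun x => x ∈ tubeSet d R ρ) hμ
  have h2 : ∀ᵐ q ∂(μ.prod μ), q.2 ∈ tubeSet d R ρ :=
      Measure.quasiMeasurePreserving_snd.ae (p := fun x => x ∈ tubeSet d R ρ) hμ
  filter_upwards [h1, h2] with q hq1 hq2
  constructor
  · have a := hq1 i0
    have b := hq2 i0
    rw [if_pos hi0] at a b
    rw [abs_le]; constructor <;> linarith [a.1, a.2, b.1, b.2]
  · intro i hi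
    have hi' : ¬ (i : ℕ) = 0 := fun h => hi (Fin.ext (by omega))
    have a := hq1 i
    have b := hq2 i
    rw [if_neg hi'] at a b
    rw [abs_le]; constructor <;> linarith [a.1, a.2, b.1, b.2]

lemma upper_bound {K : EuclideanSpace ℝ (Fin d) → ℝ} (hK : Continuous K)
    (hpd : IsPosDefKernel K) (hsym : ∀ x, K (-x) = K x) (i0 : Fin d) (hi0 : (i0 : ℕ) = 0)
    (R ρ c h : ℝ) (hc : 0 < c) (hh : 0 < h) (hcR : c * (R + h) = R)
    (N : ℝ → ℝ) (hN : Measurable N) (hN0 : ∀ u, 0 ≤ N u) (B : ℝ)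
    (hNB : ∀ u, |N u| ≤ B) (hNi : Integrable N) (A : ℝ) (hA : 0 ≤ A)
    (hpt : ∀ z : EuclideanSpace ℝ (Fin d), (∀ i ≠ i0, |z i| ≤ ρ) →
      K ((c * z i0) • EuclideanSpace.single i0 (1:ℝ)) ≤ A * K z + N (z i0))
    (μ : Measure (EuclideanSpace ℝ (Fin d))) [IsProbabilityMeasure μ]
    (hμ : μ (tubeSet d R ρ)ᶜ = 0) :
    minE K (segmentSet d R) ≤ A * energyE K μ + h⁻¹ * ∫ u, N u := by
  have hB := pd_bound hpd hsym
  refine (seg_le hK hpd hsym i0 hi0 R ρ c h hc hh hcR μ hμ).trans ?_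
  set e := EuclideanSpace.single i0 (1:ℝ) with he
  have hcoord : Measurable (fun x : EuclideanSpace ℝ (Fin d) => x i0) := by fun_prop
  let f : ℝ × ℝ → EuclideanSpace ℝ (Fin d) := fun ω => (h * (ω.1 - ω.2)) • e
  have hf : Measurable f := ((measurable_fst.sub measurable_snd).const_mul h).smul_const e
  have hmF : Measurable (fun q : (EuclideanSpace ℝ (Fin d) × EuclideanSpace ℝ (Fin d)) × (ℝ × ℝ) =>
      K ((c * (q.1.1 i0 - q.1.2 i0 + h * (q.2.1 - q.2.2))) • e)) :=
    meas_aux hK i0 c h e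
  have hmG : Measurable (fun q : (EuclideanSpace ℝ (Fin d) × EuclideanSpace ℝ (Fin d)) × (ℝ × ℝ) =>
        K (q.1.1 - q.1.2 + f q.2)) := hK.measurable.comp
    (((measurable_fst.comp measurable_fst).sub (measurable_snd.comp measurable_fst)).add
      (hf.comp measurable_snd))
  have hiF := integrable_bdd ((μ.prod μ).prod (unifM.prod unifM)) _ hmF _ (fun _ => hB _)
  have hiG := integrable_bdd ((μ.prod μ).prod (unifM.prod unifM)) _ hmG _ (fun _ => hB _)
  have havg := energy_avg hK hpd hsym μ (unifM.prod unifM) f hf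
  have hstep : ∫ p, ∫ ω, K ((c * (p.1 i0 - p.2 i0 + h * (ω.1 - ω.2))) • e)
        ∂(unifM.prod unifM) ∂(μ.prod μ) ≤
      ∫ p, (A * (∫ ω, K (p.1 - p.2 + f ω) ∂(unifM.prod unifM)) + h⁻¹ * ∫ u, N u) ∂(μ.prod μ) := by
    refine integral_mono_ae hiF.integral_prod_left
      ((hiG.integral_prod_left.const_mul A).add (integrable_const _)) ?_
    filter_upwards [tube_ae R ρ i0 hi0 μ hμ] with p hp
    have hmN : Measurable (fun ω : ℝ × ℝ => N (p.1 i0 - p.2 i0 + h * (ω.1 - ω.2))) :=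
      hN.comp (((measurable_fst.sub measurable_snd).const_mul h).const_add _)
    have hiN := integrable_bdd (unifM.prod unifM) _ hmN B (fun _ => hNB _)
    have hmG' : Measurable (fun ω : ℝ × ℝ => K (p.1 - p.2 + f ω)) :=
      hK.measurable.comp (hf.const_add _)
    have hiG' := integrable_bdd (unifM.prod unifM) _ hmG' _ (fun _ => hB _)
    have hmF' : Measurable (fun ω : ℝ × ℝ => K ((c * (p.1 i0 - p.2 i0 + h * (ω.1 - ω.2))) • e)) :=
      hK.measurable.comp (((((measurable_fst.sub measurable_snd).const_mul h).const_add
        _).const_mul c).smul_const e)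
    have hiF' := integrable_bdd (unifM.prod unifM) _ hmF' _ (fun _ => hB _)
    calc ∫ ω, K ((c * (p.1 i0 - p.2 i0 + h * (ω.1 - ω.2))) • e) ∂(unifM.prod unifM)
        ≤ ∫ ω, (A * K (p.1 - p.2 + f ω) + N (p.1 i0 - p.2 i0 + h * (ω.1 - ω.2)))
            ∂(unifM.prod unifM) := by
          refine integral_mono hiF' ((hiG'.const_mul A).add hiN) fun ω => ?_
          have hz0 : (p.1 - p.2 + f ω) i0 = p.1 i0 - p.2 i0 + h * (ω.1 - ω.2) := by
            simp [f, he]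
          have := hpt (p.1 - p.2 + f ω) (by
            intro i hi
            have : (p.1 - p.2 + f ω) i = p.1 i - p.2 i := by simp [f, he, hi]
            rw [this]
            exact hp.2 i hi)
          rw [hz0] at this
          exact this
      _ = A * (∫ ω, K (p.1 - p.2 + f ω) ∂(unifM.prod unifM)) +
            ∫ ω, N (p.1 i0 - p.2 i0 + h * (ω.1 - ω.2)) ∂(unifM.prod unifM) := by
          rw [integral_add (hiG'.const_mul A) hiN, integral_const_mul]
      _ ≤ _ := by
          gcongr
          exact noise_le N hN hN0 B hNB hNi _ h hh
  refine hstep.trans ?_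
  rw [integral_add (hiG.integral_prod_left.const_mul A) (integrable_const _), integral_const_mul]
  simp only [integral_const, probReal_univ, one_smul]
  gcongr

lemma lower_bound {K : EuclideanSpace ℝ (Fin d) → ℝ} (hK : Continuous K)
    (hpd : IsPosDefKernel K) (hsym : ∀ x, K (-x) = K x) (i0 : Fin d) (hi0 : (i0 : ℕ) = 0)
    (R ρ : ℝ) (hR : 0 < R)
    (Q : ℝ → ℝ) (hQ : Measurable Q) (B : ℝ)
    (hQB : ∀ u, |Q u| ≤ B) (hQs : ∀ u, R < |u| → Q u = 0)
    (hpt : ∀ z : EuclideanSpace ℝ (Fin d), (∀ i ≠ i0, |z i| ≤ ρ) → Q (z i0) ≤ K z)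
    (μ : Measure (EuclideanSpace ℝ (Fin d))) [IsProbabilityMeasure μ]
    (hμ : μ (tubeSet d R ρ)ᶜ = 0) :
    (4 * R)⁻¹ * (∫ u, Q u) ≤ energyE K μ := by
  have hB := pd_bound hpd hsym
  set e := EuclideanSpace.single i0 (1:ℝ) with he
  let f : ℝ → EuclideanSpace ℝ (Fin d) := fun v => (-(2 * R) + 4 * R * v) • e
  have hf : Measurable f := ((measurable_id.const_mul (4 * R)).const_add (-(2 * R))).smul_const e
  have havg := energy_avg hK hpd hsym μ unifM f hf
  refine le_trans ?_ havg
  have hmG : Measurable (fun q : (EuclideanSpace ℝ (Fin d) × EuclideanSpace ℝ (Fin d)) × ℝ =>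
        K (q.1.1 - q.1.2 + f q.2)) := hK.measurable.comp
    (((measurable_fst.comp measurable_fst).sub (measurable_snd.comp measurable_fst)).add
      (hf.comp measurable_snd))
  have hiG := integrable_bdd ((μ.prod μ).prod unifM) _ hmG _ (fun _ => hB _)
  have h1 : (4 * R)⁻¹ * (∫ u, Q u) = ∫ _p, (4 * R)⁻¹ * (∫ u, Q u) ∂(μ.prod μ) := by simp
  rw [h1]
  refine integral_mono_ae (integrable_const _) hiG.integral_prod_left ?_
  filter_upwards [tube_ae R ρ i0 hi0 μ hμ] with p hp
  set w := p.1 i0 - p.2 i0 with hw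
  have hmQ : Measurable (fun v : ℝ => Q (w - 2 * R + 4 * R * v)) :=
    hQ.comp ((measurable_id.const_mul (4 * R)).const_add _)
  have hiQ := integrable_bdd unifM _ hmQ B (fun _ => hQB _)
  have hmG' : Measurable (fun v : ℝ => K (p.1 - p.2 + f v)) :=
      hK.measurable.comp (hf.const_add _)
  have hiG' := integrable_bdd unifM _ hmG' _ (fun _ => hB _)
  calc (4 * R)⁻¹ * (∫ u, Q u) = (4 * R)⁻¹ * (∫ u, Q (w - 2 * R + u)) := by
        rw [integral_add_left_eq_self]
    _ = ∫ v, Q (w - 2 * R + 4 * R * v) := by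
        rw [Measure.integral_comp_mul_left (fun t => Q (w - 2 * R + t)) (4 * R),
          abs_of_pos (inv_pos.2 (by positivity))]
        simp
    _ = ∫ v, Q (w - 2 * R + 4 * R * v) ∂unifM := by
        symm
        apply setIntegral_eq_integral_of_forall_compl_eq_zero
        intro v hv
        apply hQs
        have hw' := abs_le.1 hp.1
        rw [Set.mem_Icc, not_and_or, not_le, not_le] at hv
        rcases hv with hv | hv
        · rw [lt_abs]; right; nlinarith
        · rw [lt_abs]; left; nlinarith
    _ ≤ ∫ v, K (p.1 - p.2 + f v) ∂unifM := by
        refine integral_mono hiQ hiG' fun v => ?_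
        have hz0 : (p.1 - p.2 + f v) i0 = w - 2 * R + 4 * R * v := by
            simp [f, he, hw]; ring
        have := hpt (p.1 - p.2 + f v) (by
            intro i hi
            have : (p.1 - p.2 + f v) i = p.1 i - p.2 i := by simp [f, he, hi]
            rw [this]
            exact hp.2 i hi)
        rw [hz0] at this
        exact this

end PartTwo

section PartThree

open Topology

lemma uct (l : ℝ → ℝ) (hl : Continuous l)
    (h : ∀ u, Tendsto (fun x => l (x + u) - l x) atTop (𝓝 0)) (ε : ℝ) (hε : 0 < ε) :
    ∃ η > 0, ∃ X, ∀ x ≥ X, ∀ w, 0 ≤ w → w ≤ η → |l (x + w) - l x| ≤ ε := by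
  let A : ℕ → Set ℝ := fun n => {u | ∀ x : ℝ, (n : ℝ) ≤ x → |l (x + u) - l x| ≤ ε / 2}
  have hAc : ∀ n, IsClosed (A n) := by
    intro n
    have : A n = ⋂ x : ℝ, ⋂ _ : (n : ℝ) ≤ x, {u | |l (x + u) - l x| ≤ ε / 2} := by
      ext u; simp [A]
    rw [this]
    refine isClosed_iInter fun x => isClosed_iInter fun _ => ?_
    exact isClosed_le (by fun_prop) continuous_const
  have hAU : ⋃ n, A n = Set.univ := by
    refine Set.eq_univ_of_forall fun u => ?_
    have h1 := (h u).eventually (Metric.closedBall_mem_nhds 0 (half_pos hε))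
    obtain ⟨X, hX⟩ := eventually_atTop.1 h1
    obtain ⟨n, hn⟩ := exists_nat_ge X
    refine Set.mem_iUnion.2 ⟨n, fun x hx => ?_⟩
    have := hX x (hn.trans hx)
    simpa [Real.dist_eq] using this
  obtain ⟨n, a, ha⟩ := nonempty_interior_of_iUnion_of_closed hAc hAU
  obtain ⟨δ, hδ, hball⟩ := Metric.mem_nhds_iff.1 (mem_interior_iff_mem_nhds.1 ha)
  refine ⟨δ / 2, half_pos hδ, n + a, fun x hx w hw0 hw => ?_⟩
  have m1 : a ∈ A n := interior_subset ha
  have m2 : a + w ∈ A n := hball (by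
    rw [Metric.mem_ball, Real.dist_eq, add_sub_cancel_left, abs_of_nonneg hw0]; linarith)
  have b1 := m1 (x - a) (by linarith)
  have b2 := m2 (x - a) (by linarith)
  have e1 : x - a + a = x := by ring
  have e2 : x - a + (a + w) = x + w := by ring
  rw [e1] at b1
  rw [e2] at b2
  rw [abs_le] at *
  constructor <;> linarith [b1.1, b1.2, b2.1, b2.2]

lemma rv_log (κ L : ℝ → ℝ) (α : ℝ) (hL : SlowlyVarying L)
    (h : Tendsto (fun x => κ x / (x ^ (-α) * L x)) atTop (𝓝 1)) :
    (∀ᶠ u in atTop, 0 < κ u) ∧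
    (∀ a, Tendsto (fun x => Real.log (κ (Real.exp (x + a))) - Real.log (κ (Real.exp x))) atTop
      (𝓝 (-(α * a)))) ∧
    (∀ ε > 0, ∃ η > 0, ∃ X, ∀ x ≥ X, ∀ w, 0 ≤ w → w ≤ η →
      |Real.log (κ (Real.exp (x + w))) - Real.log (κ (Real.exp x))| ≤ ε) := by
  obtain ⟨hLc, hLp, hLs⟩ := hL
  have hpos : ∀ᶠ u in atTop, 0 < κ u := by
    filter_upwards [h.eventually (lt_mem_nhds one_pos), eventually_gt_atTop 0] with u hu hu0
    have hd : 0 < u ^ (-α) * L u := mul_pos (Real.rpow_pos_of_pos hu0 _) (hLp u hu0)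
    have := mul_pos hu hd
    rwa [div_mul_cancel₀ _ hd.ne'] at this
  let l : ℝ → ℝ := fun x => Real.log (L (Real.exp x))
  have hlc : Continuous l := by
    have h1 : Continuous (fun x => L (Real.exp x)) :=
      hLc.comp_continuous Real.continuous_exp (fun x => Real.exp_pos x)
    exact h1.log (fun x => (hLp _ (Real.exp_pos x)).ne')
  have hls : ∀ u, Tendsto (fun x => l (x + u) - l x) atTop (𝓝 0) := by
    intro u
    have h1 := (hLs (Real.exp u) (Real.exp_pos u)).comp Real.tendsto_exp_atTop
    have h2 := (Real.continuousAt_log one_ne_zero).tendsto.comp h1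
    rw [Real.log_one] at h2
    refine h2.congr fun x => ?_
    simp only [Function.comp_apply, l]
    rw [Real.log_div (hLp _ (by positivity)).ne' (hLp _ (by positivity)).ne', Real.exp_add,
      mul_comm]
  let q : ℝ → ℝ := fun x => Real.log (κ (Real.exp x) / ((Real.exp x) ^ (-α) * L (Real.exp x)))
  have hq : Tendsto q atTop (𝓝 0) := by
    have h1 := h.comp Real.tendsto_exp_atTop
    have h2 := (Real.continuousAt_log one_ne_zero).tendsto.comp h1
    rwa [Real.log_one] at h2
  obtain ⟨X0, hX0⟩ := eventually_atTop.1 (Real.tendsto_exp_atTop.eventually hpos)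
  have hrep : ∀ x ≥ X0, Real.log (κ (Real.exp x)) = -α * x + l x + q x := by
    intro x hx
    have hk := hX0 x hx
    have hLx := hLp _ (Real.exp_pos x)
    have hr : 0 < (Real.exp x) ^ (-α) := Real.rpow_pos_of_pos (Real.exp_pos x) _
    simp only [l, q]
    rw [Real.log_div hk.ne' (mul_pos hr hLx).ne', Real.log_mul hr.ne' hLx.ne',
      Real.log_rpow (Real.exp_pos x), Real.log_exp]
    ring
  refine ⟨hpos, ?_, ?_⟩
  · intro a
    have hq2 : Tendsto (fun x => q (x + a)) atTop (𝓝 0) :=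
      hq.comp (tendsto_atTop_add_const_right _ a tendsto_id)
    have h3 : Tendsto (fun x => -(α * a) + ((l (x + a) - l x) + (q (x + a) - q x))) atTop
        (𝓝 (-(α * a) + (0 + (0 - 0)))) :=
      tendsto_const_nhds.add ((hls a).add (hq2.sub hq))
    simp only [sub_zero, add_zero] at h3
    refine h3.congr' ?_
    filter_upwards [eventually_ge_atTop X0, eventually_ge_atTop (X0 - a)] with x h1 h2
    rw [hrep x h1, hrep (x + a) (by linarith)]
    ring
  · intro ε hε
    obtain ⟨η, hη, X, hX⟩ := uct l hlc hls (ε / 4) (by linarith)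
    obtain ⟨X1, hX1⟩ := eventually_atTop.1
      (hq.eventually (Metric.closedBall_mem_nhds 0 (show 0 < ε / 4 by linarith)))
    refine ⟨min η (ε / (4 * (|α| + 1))), lt_min hη (by positivity), max X0 (max X X1),
      fun x hx w hw0 hw => ?_⟩
    have g0 : X0 ≤ x := (le_max_left _ _).trans hx
    have g1 : X ≤ x := ((le_max_left _ _).trans (le_max_right _ _)).trans hx
    have g2 : X1 ≤ x := ((le_max_right _ _).trans (le_max_right _ _)).trans hx
    have b1 := hX x g1 w hw0 (hw.trans (min_le_left _ _))
    have b2 := hX1 x g2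
    have b3 := hX1 (x + w) (by linarith)
    simp only [Metric.mem_closedBall, Real.dist_eq, sub_zero] at b2 b3
    have b4 : |α * w| ≤ ε / 4 := by
      rw [abs_mul, abs_of_nonneg hw0]
      have : w * (4 * (|α| + 1)) ≤ ε := by
        have := hw.trans (min_le_right _ _)
        rwa [le_div_iff₀ (by positivity)] at this
      nlinarith [abs_nonneg α]
    rw [hrep x g0, hrep (x + w) (by linarith)]
    rw [abs_le] at *
    constructor <;> nlinarith [b1.1, b1.2, b2.1, b2.2, b3.1, b3.2, b4.1, b4.2]

lemma rv_main (κ L : ℝ → ℝ) (α : ℝ) (hα1 : α ≤ 1) (hL : SlowlyVarying L)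
    (h : Tendsto (fun x => κ x / (x ^ (-α) * L x)) atTop (𝓝 1)) (A : ℝ) (hA : 1 < A) :
    ∃ c, 0 < c ∧ c < 1 ∧ ∃ T1 > 0, ∃ M > 0, ∀ u ≥ T1, ∀ v, u ≤ v → v ≤ u + u / M →
      κ (c * u) ≤ A * κ v ∧ κ u ≤ 2 * κ v := by
  obtain ⟨hpos, hlim, hunif⟩ := rv_log κ L α hL h
  have hlA : 0 < Real.log A := Real.log_pos hA
  set a := Real.log A / 2 with ha
  have hl2 : 0 < Real.log 2 := Real.log_pos (by norm_num)
  set ε := min (Real.log A / 8) (Real.log 2) with hε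
  have hεp : 0 < ε := lt_min (by linarith) hl2
  have hεA : ε ≤ Real.log A / 8 := min_le_left _ _
  have hε2 : ε ≤ Real.log 2 := min_le_right _ _
  obtain ⟨η, hη, X, hX⟩ := hunif ε hεp
  obtain ⟨X1, hX1⟩ := eventually_atTop.1
      ((hlim (-a)).eventually (Metric.closedBall_mem_nhds _ hεp))
  obtain ⟨X2, hX2⟩ := eventually_atTop.1 (Real.tendsto_exp_atTop.eventually hpos)
  refine ⟨Real.exp (-a), Real.exp_pos _, ?_, Real.exp (max X (max X1 (X2 + a))), Real.exp_pos _,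
    (Real.exp η - 1)⁻¹, ?_, ?_⟩
  · rw [Real.exp_lt_one_iff]; linarith
  · rw [gt_iff_lt, inv_pos]; linarith [Real.one_lt_exp_iff.2 hη]
  intro u hu v huv hv
  have hup : 0 < u := (Real.exp_pos _).trans_le hu
  have hvp : 0 < v := hup.trans_le huv
  obtain ⟨x, rfl⟩ : ∃ x, u = Real.exp x := ⟨Real.log u, (Real.exp_log hup).symm⟩
  obtain ⟨y, rfl⟩ : ∃ y, v = Real.exp y := ⟨Real.log v, (Real.exp_log hvp).symm⟩
  have hx := Real.exp_le_exp.1 hu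
  have hxy := Real.exp_le_exp.1 huv
  have g0 : X ≤ x := (le_max_left _ _).trans hx
  have g1 : X1 ≤ x := ((le_max_left _ _).trans (le_max_right _ _)).trans hx
  have g2 : X2 + a ≤ x := ((le_max_right _ _).trans (le_max_right _ _)).trans hx
  have hyx : y ≤ x + η := by
    rw [div_inv_eq_mul] at hv
    rw [← Real.exp_le_exp, Real.exp_add]
    linarith
  have b1 := abs_le.1 (hX x g0 (y - x) (by linarith) (by linarith))
  rw [add_sub_cancel] at b1
  have b2 := hX1 x g1
  simp only [Metric.mem_closedBall, Real.dist_eq] at b2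
  have b2 := abs_le.1 b2
  have p1 : 0 < κ (Real.exp (x + -a)) := hX2 _ (by linarith)
  have p2 : 0 < κ (Real.exp x) := hX2 _ (by linarith)
  have p3 : 0 < κ (Real.exp y) := hX2 _ (by linarith)
  constructor
  · rw [← Real.exp_add, add_comm (-a) x, ← Real.log_le_log_iff p1 (by positivity),
      Real.log_mul (by positivity) p3.ne']
    have : α * a ≤ a := by nlinarith
    nlinarith [b1.1, b1.2, b2.1, b2.2]
  · rw [← Real.log_le_log_iff p2 (by positivity), Real.log_mul (by positivity) p3.ne']
    linarith [b1.1]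

lemma rv_lower (κ L : ℝ → ℝ) (hκ : Continuous κ) (α : ℝ) (hα1 : α < 1) (hL : SlowlyVarying L)
    (h : Tendsto (fun x => κ x / (x ^ (-α) * L x)) atTop (𝓝 1)) :
    ∃ b > 0, ∃ T > 0, ∀ u ≥ T, b * u ^ (-((α + 1) / 2)) ≤ κ u := by
  obtain ⟨hpos, hlim, -⟩ := rv_log κ L α hL h
  set β := (α + 1) / 2 with hβ
  have hl2 : 0 < Real.log 2 := Real.log_pos (by norm_num)
  have hlt : -(β * Real.log 2) < -(α * Real.log 2) := by
    have : α < β := by rw [hβ]; linarith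
    nlinarith
  obtain ⟨X1, hX1⟩ := eventually_atTop.1 ((hlim (Real.log 2)).eventually (lt_mem_nhds hlt))
  obtain ⟨X2, hX2⟩ := eventually_atTop.1 (Real.tendsto_exp_atTop.eventually hpos)
  set X := max X1 X2 with hX
  let g : ℝ → ℝ := fun x => Real.log (κ (Real.exp x)) + β * x
  have hgc : ContinuousOn g (Set.Icc X (X + Real.log 2)) := by
    refine ContinuousOn.add (ContinuousOn.log ?_ ?_) (by fun_prop)
    · exact (hκ.comp Real.continuous_exp).continuousOn
    · intro x hx
      exact (hX2 x ((le_max_right _ _).trans hx.1)).ne'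
  obtain ⟨x0, hx0, hmin⟩ := isCompact_Icc.exists_isMinOn
    (Set.nonempty_Icc.2 (by linarith : X ≤ X + Real.log 2)) hgc
  set m := g x0 with hm
  have hind : ∀ n : ℕ, ∀ x, X ≤ x → x ≤ X + (n + 1) * Real.log 2 → m ≤ g x := by
    intro n
    induction n with
    | zero => intro x h1 h2; exact hmin ⟨h1, by simpa using h2⟩
    | succ n ih =>
      intro x h1 h2
      by_cases hx : x ≤ X + Real.log 2
      · exact hmin ⟨h1, hx⟩
      · push Not at hx
        push_cast at h2
        have h3 := ih (x - Real.log 2) (by linarith) (by linarith)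
        have h4 := hX1 (x - Real.log 2) (by linarith [le_max_left X1 X2])
        rw [sub_add_cancel] at h4
        simp only [g] at h3 ⊢
        linarith
  have hall : ∀ x, X ≤ x → m ≤ g x := by
    intro x hx
    obtain ⟨n, hn⟩ := exists_nat_ge ((x - X) / Real.log 2)
    refine hind n x hx ?_
    rw [div_le_iff₀ hl2] at hn
    linarith
  refine ⟨Real.exp m, Real.exp_pos _, Real.exp X, Real.exp_pos _, fun u hu => ?_⟩
  have hup : 0 < u := (Real.exp_pos _).trans_le hu
  obtain ⟨x, rfl⟩ : ∃ x, u = Real.exp x := ⟨Real.log u, (Real.exp_log hup).symm⟩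
  have hx := Real.exp_le_exp.1 hu
  have hk := hX2 x ((le_max_right _ _).trans hx)
  have h1 := hall x hx
  simp only [g] at h1
  rw [← Real.exp_mul, ← Real.exp_add, ← Real.le_log_iff_exp_le hk]
  linarith

end PartThree

section PartFour

open Topology

noncomputable def Gf (κ : ℝ → ℝ) (x : ℝ) : ℝ := ∫ t in (0:ℝ)..x, |κ t|

lemma Gf_int {κ : ℝ → ℝ} (hκ : Continuous κ) (a b : ℝ) :
    IntervalIntegrable (fun t => |κ t|) volume a b := hκ.abs.intervalIntegrable _ _

lemma Gf_sub {κ : ℝ → ℝ} (hκ : Continuous κ) (a b : ℝ) :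
    Gf κ b = Gf κ a + ∫ t in a..b, |κ t| :=
  (intervalIntegral.integral_add_adjacent_intervals (Gf_int hκ _ _) (Gf_int hκ _ _)).symm

lemma Gf_mono {κ : ℝ → ℝ} (hκ : Continuous κ) {a b : ℝ} (hab : a ≤ b) : Gf κ a ≤ Gf κ b := by
  rw [Gf_sub hκ a b]
  have := intervalIntegral.integral_nonneg hab (f := fun t => |κ t|) (fun _ _ => abs_nonneg _)
    (μ := volume)
  linarith

lemma Gf_nonneg {κ : ℝ → ℝ} (hκ : Continuous κ) {a : ℝ} (ha : 0 ≤ a) : 0 ≤ Gf κ a := by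
  have := Gf_mono hκ ha
  simpa [Gf] using this

lemma Gf_le {κ : ℝ → ℝ} (hκ : Continuous κ) (K0 : ℝ) (hB : ∀ x, |κ x| ≤ K0) {a : ℝ}
    (ha : 0 ≤ a) : Gf κ a ≤ K0 * a := by
  have h := intervalIntegral.integral_mono_on ha (Gf_int hκ 0 a)
    (intervalIntegrable_const (c := K0)) (fun t _ => hB t)
  simp at h
  rw [Gf]
  linarith

lemma G_case1 {κ : ℝ → ℝ} (hκ : Continuous κ) (K0 : ℝ) (hB : ∀ x, |κ x| ≤ K0)
    (b β T0 : ℝ) (hb : 0 < b) (hβ0 : 0 ≤ β) (hβ : β < 1) (hT0 : 0 < T0)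
    (hlow : ∀ u ≥ T0, b * u ^ (-β) ≤ κ u) :
    Tendsto (Gf κ) atTop atTop ∧ ∀ T : ℝ → ℝ, (∀ R, 2 ≤ T R) →
      Tendsto (fun R => Real.log (T R) / Real.log R) atTop (𝓝 0) →
      Tendsto (fun R => Gf κ (T R) / Gf κ R) atTop (𝓝 0) := by
  have hK0 : 0 ≤ K0 := (abs_nonneg _).trans (hB 0)
  have hG : ∀ R ≥ 2 * T0, b / 2 * R ^ (1 - β) ≤ Gf κ R := by
    intro R hR
    have hRp : 0 < R := by linarith
    have hT : T0 ≤ R := by linarith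
    rw [Gf_sub hκ T0 R]
    have h1 := intervalIntegral.integral_mono_on hT
      (intervalIntegrable_const (c := b * R ^ (-β)) (μ := volume)) (Gf_int hκ T0 R) (fun t ht => by
        have h2 := hlow t ht.1
        have h3 : R ^ (-β) ≤ t ^ (-β) :=
          Real.rpow_le_rpow_of_nonpos (by linarith [ht.1]) ht.2 (by linarith)
        calc b * R ^ (-β) ≤ b * t ^ (-β) := by gcongr
          _ ≤ κ t := h2
          _ ≤ _ := le_abs_self _)
    simp only [intervalIntegral.integral_const, smul_eq_mul] at h1
    have h4 := Gf_nonneg hκ hT0.le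
    have h5 : R ^ (1 - β) = R * R ^ (-β) := by
      rw [sub_eq_add_neg, Real.rpow_add hRp, Real.rpow_one]
    have h6 : 0 < R ^ (-β) := Real.rpow_pos_of_pos hRp _
    rw [h5]
    have h7 : R / 2 * (b * R ^ (-β)) ≤ (R - T0) * (b * R ^ (-β)) := by
      gcongr; linarith
    linarith
  have hR1 : Tendsto (fun R : ℝ => b / 2 * R ^ (1 - β)) atTop atTop :=
    (tendsto_rpow_atTop (by linarith)).const_mul_atTop (by positivity)
  refine ⟨tendsto_atTop_mono' _ ((eventually_ge_atTop (2 * T0)).mono hG) hR1, ?_⟩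
  intro T hT hlog
  have hexp : Tendsto (fun R => Real.log R * (Real.log (T R) / Real.log R - (1 - β))) atTop
      atBot := by
    refine Tendsto.atTop_mul_neg (C := 0 - (1 - β)) (by linarith) Real.tendsto_log_atTop ?_
    exact hlog.sub_const _
  have hup := (Real.tendsto_exp_atBot.comp hexp).const_mul (K0 * (2 / b))
  rw [mul_zero] at hup
  refine squeeze_zero' ?_ ?_ hup
  · filter_upwards [eventually_ge_atTop 0] with R hR
    exact div_nonneg (Gf_nonneg hκ (by linarith [hT R])) (Gf_nonneg hκ hR)
  · filter_upwards [eventually_ge_atTop (2 * T0), eventually_gt_atTop 1] with R hR hR1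
    have hRp : 0 < R := by linarith
    have hTp : 0 < T R := by linarith [hT R]
    have hr : 0 < R ^ (1 - β) := Real.rpow_pos_of_pos hRp _
    have hlR : 0 < Real.log R := Real.log_pos hR1
    have e1 : Real.exp (Real.log R * (Real.log (T R) / Real.log R - (1 - β))) =
        T R / R ^ (1 - β) := by
      rw [mul_sub, mul_div_cancel₀ _ hlR.ne', Real.exp_sub, Real.exp_log hTp,
        Real.rpow_def_of_pos hRp]
    simp only [Function.comp_apply]
    rw [e1]
    calc Gf κ (T R) / Gf κ R ≤ (K0 * T R) / (b / 2 * R ^ (1 - β)) := by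
          gcongr
          · exact Gf_le hκ K0 hB hTp.le
          · exact hG R hR
      _ = _ := by field_simp

lemma G_case2 {κ : ℝ → ℝ} (hκ : Continuous κ) (K0 : ℝ) (hB : ∀ x, |κ x| ≤ K0)
    (γ : ℝ) (hγ : γ < 1)
    (h : Tendsto (fun x => κ x / (x⁻¹ * Real.log x ^ (-γ))) atTop (𝓝 1)) :
    Tendsto (Gf κ) atTop atTop ∧ ∀ T : ℝ → ℝ, (∀ R, 2 ≤ T R) →
      Tendsto (fun R => Real.log (T R) / Real.log R) atTop (𝓝 0) →
      Tendsto (fun R => Gf κ (T R) / Gf κ R) atTop (𝓝 0) := by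
  have hK0 : 0 ≤ K0 := (abs_nonneg _).trans (hB 0)
  set p := 1 - γ with hp
  have hpp : 0 < p := by linarith
  obtain ⟨X, hX⟩ := eventually_atTop.1 (h.eventually
    (Icc_mem_nhds (show (1/2:ℝ) < 1 by norm_num) (show (1:ℝ) < 2 by norm_num)))
  set x0 := max X (Real.exp 1) with hx0
  have hx0e : Real.exp 1 ≤ x0 := le_max_right _ _
  have hx0p : 0 < x0 := (Real.exp_pos 1).trans_le hx0e
  have hlog1 : ∀ u ≥ x0, 1 ≤ Real.log u := fun u hu => by
    rw [Real.le_log_iff_exp_le (by linarith)]; linarith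
  let f : ℝ → ℝ := fun u => u⁻¹ * Real.log u ^ (-γ)
  have hfp : ∀ u ≥ x0, 0 < f u := fun u hu =>
    mul_pos (inv_pos.2 (by linarith)) (Real.rpow_pos_of_pos (by linarith [hlog1 u hu]) _)
  have hk1 : ∀ u ≥ x0, 1 / 2 * f u ≤ |κ u| := fun u hu => by
    have := (hX u ((le_max_left _ _).trans hu)).1
    rw [le_div_iff₀ (hfp u hu)] at this
    exact this.trans (le_abs_self _)
  have hk2 : ∀ u ≥ x0, |κ u| ≤ 2 * f u := fun u hu => by
    have h1 := hX u ((le_max_left _ _).trans hu)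
    have h2 := h1.2
    have h3 := h1.1
    rw [div_le_iff₀ (hfp u hu)] at h2
    rw [le_div_iff₀ (hfp u hu)] at h3
    rw [abs_of_nonneg (le_trans (by have := hfp u hu; positivity) h3)]
    exact h2
  have hfc : ∀ x ≥ x0, ContinuousOn f (Set.Icc x0 x) := by
    intro x hx u hu
    have hu0 : u ≠ 0 := by linarith [hu.1]
    have hl : Real.log u ≠ 0 := by linarith [hlog1 u hu.1]
    exact (((continuousAt_inv₀ hu0).mul
      ((Real.continuousAt_log hu0).rpow_const (Or.inl hl)))).continuousWithinAt
  have hfi : ∀ x ≥ x0, IntervalIntegrable f volume x0 x := fun x hx => by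
    apply ContinuousOn.intervalIntegrable
    rw [Set.uIcc_of_le hx]
    exact hfc x hx
  have hFTC : ∀ x ≥ x0, ∫ u in x0..x, f u = Real.log x ^ p / p - Real.log x0 ^ p / p := by
    intro x hx
    refine intervalIntegral.integral_eq_sub_of_hasDerivAt (f := fun u => Real.log u ^ p / p)
      (fun u hu => ?_) (hfi x hx)
    rw [Set.uIcc_of_le hx] at hu
    have hu0 : u ≠ 0 := by linarith [hu.1]
    have hl : Real.log u ≠ 0 := by linarith [hlog1 u hu.1]
    have h1 := ((Real.hasDerivAt_log hu0).rpow_const (p := p) (Or.inl hl)).div_const p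
    have h2 : p - 1 = -γ := by rw [hp]; ring
    rw [h2] at h1
    refine h1.congr_deriv ?_
    change u⁻¹ * p * Real.log u ^ (-γ) / p = u⁻¹ * Real.log u ^ (-γ)
    field_simp
  have hlow : ∀ x ≥ x0, 1 / 2 * (Real.log x ^ p / p - Real.log x0 ^ p / p) ≤ Gf κ x := by
    intro x hx
    rw [Gf_sub hκ x0 x, ← hFTC x hx, ← intervalIntegral.integral_const_mul]
    have h1 := intervalIntegral.integral_mono_on hx ((hfi x hx).const_mul (1/2)) (Gf_int hκ x0 x)
      (fun t ht => hk1 t ht.1)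
    have := Gf_nonneg hκ hx0p.le
    linarith
  set C := K0 * x0 + 2 / p with hC
  have hCp : 0 < C := by positivity
  have hupp : ∀ x ≥ x0, Gf κ x ≤ C * Real.log x ^ p := by
    intro x hx
    rw [Gf_sub hκ x0 x]
    have h1 := intervalIntegral.integral_mono_on hx (Gf_int hκ x0 x) ((hfi x hx).const_mul 2)
      (fun t ht => hk2 t ht.1)
    rw [intervalIntegral.integral_const_mul, hFTC x hx] at h1
    have h2 := Gf_le hκ K0 hB hx0p.le
    have h3 : 1 ≤ Real.log x ^ p := Real.one_le_rpow (hlog1 x hx) hpp.le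
    have h4 : 0 ≤ Real.log x0 ^ p / p :=
      div_nonneg (Real.rpow_nonneg (by linarith [hlog1 x0 le_rfl]) _) hpp.le
    have h5 : K0 * x0 ≤ K0 * x0 * Real.log x ^ p := by
      nlinarith [mul_nonneg hK0 hx0p.le]
    rw [hC, add_mul]
    have h6 : 2 * (Real.log x ^ p / p) = 2 / p * Real.log x ^ p := by ring
    linarith
  have hlp : Tendsto (fun x => Real.log x ^ p) atTop atTop :=
    (tendsto_rpow_atTop hpp).comp Real.tendsto_log_atTop
  have hlow2 : ∀ᶠ x in atTop, 1 / (4 * p) * Real.log x ^ p ≤ Gf κ x := by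
    filter_upwards [eventually_ge_atTop x0, hlp.eventually_ge_atTop (2 * Real.log x0 ^ p)]
      with x hx h1
    refine le_trans ?_ (hlow x hx)
    have : 1 / (4 * p) * Real.log x ^ p = 1 / 2 * ((Real.log x ^ p / 2) / p) := by
      field_simp; ring
    rw [this, ← sub_div]
    gcongr
    linarith
  refine ⟨tendsto_atTop_mono' _ hlow2 (hlp.const_mul_atTop (by positivity)), ?_⟩
  intro T hT hlog
  have hsum : Tendsto (fun R => Real.log (T R) / Real.log R + Real.log x0 / Real.log R) atTop
      (𝓝 0) := by
    have := hlog.add (tendsto_const_nhds.div_atTop Real.tendsto_log_atTop (a := Real.log x0))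
    simpa using this
  have hpow : Tendsto (fun R => (C * (4 * p)) *
      (Real.log (T R) / Real.log R + Real.log x0 / Real.log R) ^ p) atTop (𝓝 0) := by
    have h1 := hsum.rpow_const (p := p) (Or.inr hpp.le)
    rw [Real.zero_rpow hpp.ne'] at h1
    simpa using h1.const_mul (C * (4 * p))
  refine squeeze_zero' ?_ ?_ hpow
  · filter_upwards [eventually_ge_atTop 0] with R hR
    exact div_nonneg (Gf_nonneg hκ (by linarith [hT R])) (Gf_nonneg hκ hR)
  · filter_upwards [hlow2, eventually_gt_atTop 1] with R hR hR1
    have hlR : 0 < Real.log R := Real.log_pos hR1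
    have hTR := hT R
    have hlT : 0 ≤ Real.log (T R) := Real.log_nonneg (by linarith)
    have hl0 : 1 ≤ Real.log x0 := hlog1 x0 le_rfl
    have hlRp : 0 < Real.log R ^ p := Real.rpow_pos_of_pos hlR _
    have hx01 : 1 ≤ x0 := le_trans (by linarith [Real.add_one_le_exp 1]) hx0e
    have h1 : Gf κ (T R) ≤ C * (Real.log (T R) + Real.log x0) ^ p := by
      have hge : x0 ≤ T R * x0 := by nlinarith
      calc Gf κ (T R) ≤ Gf κ (T R * x0) := Gf_mono hκ (by nlinarith)
        _ ≤ C * Real.log (T R * x0) ^ p := hupp _ hge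
        _ = _ := by rw [Real.log_mul (by linarith) hx0p.ne']
    calc Gf κ (T R) / Gf κ R ≤ C * (Real.log (T R) + Real.log x0) ^ p /
          (1 / (4 * p) * Real.log R ^ p) := by gcongr
      _ = _ := by
          rw [← add_div, Real.div_rpow (by linarith) hlR.le]
          field_simp

lemma logT (r : ℝ → ℝ) (hr0 : ∀ R : ℝ, 0 ≤ r R)
    (hro : Tendsto (fun R => Real.log (max (r R) 2) / Real.log R) atTop (𝓝 0))
    (a b : ℝ) (ha : 2 ≤ a) (hb : 0 ≤ b) :
    Tendsto (fun R => Real.log (a + b * r R) / Real.log R) atTop (𝓝 0) := by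
  have hsum : Tendsto (fun R => Real.log (a + b) / Real.log R +
      Real.log (max (r R) 2) / Real.log R) atTop (𝓝 0) := by
    have := (tendsto_const_nhds.div_atTop Real.tendsto_log_atTop (a := Real.log (a + b))).add hro
    simpa using this
  refine squeeze_zero' ?_ ?_ hsum
  · filter_upwards [eventually_gt_atTop 1] with R hR
    have := mul_nonneg hb (hr0 R)
    exact div_nonneg (Real.log_nonneg (by linarith)) (Real.log_pos hR).le
  · filter_upwards [eventually_gt_atTop 1] with R hR
    have h0 := mul_nonneg hb (hr0 R)
    have h2 : (2:ℝ) ≤ max (r R) 2 := le_max_right _ _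
    have h3 : r R ≤ max (r R) 2 := le_max_left _ _
    rw [← add_div, ← Real.log_mul (by linarith) (by linarith)]
    have hlR := Real.log_pos hR
    gcongr
    nlinarith

end PartFour

section PartFive

open Topology

variable {d : ℕ}

lemma norm_bounds (i0 : Fin d) (z : EuclideanSpace ℝ (Fin d)) (ρ : ℝ) (hρ : 0 ≤ ρ)
    (hz : ∀ i ≠ i0, |z i| ≤ ρ) : |z i0| ≤ ‖z‖ ∧ ‖z‖ ≤ |z i0| + d * ρ := by
  have hd : (1:ℝ) ≤ d := by
    have := i0.2
    exact_mod_cast (by omega : 1 ≤ d)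
  have hsq := EuclideanSpace.real_norm_sq_eq z
  rw [← Finset.add_sum_erase _ _ (Finset.mem_univ i0)] at hsq
  constructor
  · refine abs_le_of_sq_le_sq ?_ (norm_nonneg z)
    rw [hsq]
    have : 0 ≤ ∑ i ∈ Finset.univ.erase i0, z i ^ 2 := Finset.sum_nonneg fun i _ => sq_nonneg _
    linarith
  · have h1 : ∑ i ∈ Finset.univ.erase i0, z i ^ 2 ≤ ∑ _i ∈ Finset.univ.erase i0, ρ ^ 2 := by
      refine Finset.sum_le_sum fun i hi => ?_
      rw [← sq_abs]
      exact pow_le_pow_left₀ (abs_nonneg _) (hz i (Finset.ne_of_mem_erase hi)) 2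
    have h2 : ∑ _i ∈ Finset.univ.erase i0, ρ ^ 2 ≤ d * ρ ^ 2 := by
      rw [Finset.sum_const, nsmul_eq_mul]
      gcongr
      exact (Finset.card_le_univ _).trans_eq (Fintype.card_fin d)
    refine abs_le_of_sq_le_sq' ?_ (by positivity) |>.2
    rw [hsq]
    have h3 : (d:ℝ) * ρ ^ 2 ≤ (d * ρ) ^ 2 := by
      rw [mul_pow]; exact mul_le_mul_of_nonneg_right (by nlinarith) (sq_nonneg ρ)
    have h4 : 0 ≤ |z i0| * (d * ρ) := by positivity
    have h5 := sq_abs (z i0)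
    nlinarith

lemma main_est (K : EuclideanSpace ℝ (Fin d) → ℝ) (hK : Continuous K)
    (hpd : IsPosDefKernel K) (hsym : ∀ x, K (-x) = K x) (i0 : Fin d) (hi0 : (i0 : ℕ) = 0)
    (κ : ℝ → ℝ) (hκ : Continuous κ) (hκe : ∀ u, κ |u| = κ u) (hKκ : ∀ z, K z = κ ‖z‖)
    (A c T1 M T0 : ℝ) (hA : 1 < A) (hc : 0 < c) (hc1 : c < 1) (hT1 : 0 < T1) (hM : 0 < M)
    (hT0 : 0 < T0)
    (hreg : ∀ u ≥ T1, ∀ v, u ≤ v → v ≤ u + u / M → κ (c * u) ≤ A * κ v ∧ κ u ≤ 2 * κ v)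
    (hpos : ∀ u ≥ T0, 0 < κ u)
    (R ρ T : ℝ) (hR : T0 ≤ R) (hρ : 0 ≤ ρ) (hTT1 : T1 ≤ T) (hTT0 : T0 ≤ T) (hTρ : M * d * ρ ≤ T)
    (hTR : T ≤ R)
    (μ : Measure (EuclideanSpace ℝ (Fin d))) [IsProbabilityMeasure μ]
    (hμ : μ (tubeSet d R ρ)ᶜ = 0) :
    minE K (segmentSet d R) ≤ A * energyE K μ +
      (R * (1 - c) / c)⁻¹ * (2 * c⁻¹ * Gf κ T + 2 * A * (T0 * K 0)) ∧
    (4 * R)⁻¹ * (1 / 2 * (Gf κ R - Gf κ T) - 2 * (T0 * K 0)) ≤ energyE K μ := by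
  have hB := pd_bound hpd hsym
  have hK0 : 0 ≤ K 0 := (abs_nonneg _).trans (hB 0)
  have hRp : 0 < R := by linarith
  have hTp : 0 < T := by linarith
  set e := EuclideanSpace.single i0 (1:ℝ) with he
  have hen : ‖e‖ = 1 := by simp [he]
  have hKe : ∀ u : ℝ, K (u • e) = κ u := fun u => by
    rw [hKκ, norm_smul, hen, mul_one, Real.norm_eq_abs, hκe]
  have hκB : ∀ u, |κ u| ≤ K 0 := fun u => by rw [← hKe]; exact hB _
  have hcore : ∀ z : EuclideanSpace ℝ (Fin d), (∀ i ≠ i0, |z i| ≤ ρ) →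
      0 ≤ K z + (Set.Icc (-T0) T0).indicator (fun _ => K 0) (z i0) := by
    intro z hz
    have hn := norm_bounds i0 z ρ hρ hz
    by_cases hzT : T0 ≤ ‖z‖
    · have h1 := hpos _ hzT
      rw [← hKκ] at h1
      have h2 := Set.indicator_nonneg (s := Set.Icc (-T0) T0) (f := fun _ => K 0)
        (fun _ _ => hK0) (z i0)
      linarith
    · push Not at hzT
      rw [Set.indicator_of_mem (by rw [Set.mem_Icc, ← abs_le]; linarith [hn.1])]
      linarith [(abs_le.1 (hB z)).1]
  have hfar : ∀ z : EuclideanSpace ℝ (Fin d), (∀ i ≠ i0, |z i| ≤ ρ) → T ≤ |z i0| →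
      κ (c * z i0) ≤ A * K z ∧ κ (z i0) ≤ 2 * K z := by
    intro z hz hzT
    have hn := norm_bounds i0 z ρ hρ hz
    have h1 := hreg |z i0| (by linarith) ‖z‖ hn.1 (by
      refine hn.2.trans ?_
      gcongr
      rw [le_div_iff₀ hM]
      linarith)
    rw [hκe, ← hKκ] at h1
    have h2 : κ (c * |z i0|) = κ (c * z i0) := by
      rw [← hκe (c * z i0), abs_mul, abs_of_pos hc]
    rw [h2] at h1
    exact h1
  have hI0 : ∫ u, (Set.Icc (-T0) T0).indicator (fun _ => K 0) u = 2 * (T0 * K 0) := by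
    rw [integral_indicator measurableSet_Icc, setIntegral_const, Measure.real, Real.volume_Icc,
      ENNReal.toReal_ofReal (by linarith), smul_eq_mul]
    ring
  have hi0i : Integrable ((Set.Icc (-T0) T0).indicator (fun _ => K 0)) :=
    (integrable_indicator_iff measurableSet_Icc).2 (integrableOn_const (by simp))
  have hm0 : Measurable ((Set.Icc (-T0) T0).indicator (fun _ => K 0)) :=
    measurable_const.indicator measurableSet_Icc
  have hb0 : ∀ u, 0 ≤ (Set.Icc (-T0) T0).indicator (fun _ => K 0) u ∧
      (Set.Icc (-T0) T0).indicator (fun _ => K 0) u ≤ K 0 := fun u =>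
    ⟨Set.indicator_nonneg (fun _ _ => hK0) u, Set.indicator_le_self' (fun _ _ => hK0) u⟩
  constructor
  · let N : ℝ → ℝ := fun u => (Set.Icc (-T) T).indicator (fun u => |κ (c * u)|) u +
      A * (Set.Icc (-T0) T0).indicator (fun _ => K 0) u
    have hc' : Continuous (fun u => |κ (c * u)|) := by fun_prop
    have hm1 : Measurable ((Set.Icc (-T) T).indicator (fun u => |κ (c * u)|)) :=
      hc'.measurable.indicator measurableSet_Icc
    have hi1 : Integrable ((Set.Icc (-T) T).indicator (fun u => |κ (c * u)|)) :=
      (integrable_indicator_iff measurableSet_Icc).2 (hc'.continuousOn.integrableOn_Icc)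
    have hb1 : ∀ u, 0 ≤ (Set.Icc (-T) T).indicator (fun u => |κ (c * u)|) u ∧
      (Set.Icc (-T) T).indicator (fun u => |κ (c * u)|) u ≤ K 0 := fun u =>
      ⟨Set.indicator_nonneg (fun _ _ => abs_nonneg _) u,
        Set.indicator_apply_le' (fun _ => hκB _) (fun _ => hK0)⟩
    have hN0 : ∀ u, 0 ≤ N u := fun u => add_nonneg (hb1 u).1 (mul_nonneg (by linarith) (hb0 u).1)
    have hub := upper_bound hK hpd hsym i0 hi0 R ρ c (R * (1 - c) / c) hc
      (by have : 0 < 1 - c := by linarith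
          positivity) (by field_simp; ring) N
      (hm1.add (hm0.const_mul A)) hN0 (K 0 + A * K 0)
      (fun u => by
        rw [abs_of_nonneg (hN0 u)]
        exact add_le_add (hb1 u).2 (mul_le_mul_of_nonneg_left (hb0 u).2 (by linarith)))
      (hi1.add (hi0i.const_mul A)) A (by linarith)
      (fun z hz => by
        rw [← he, hKe]
        simp only [N]
        by_cases hzT : T ≤ |z i0|
        · have h1 := (hfar z hz hzT).1
          have h2 := hN0 (z i0)
          simp only [N] at h2
          linarith
        · push Not at hzT
          rw [Set.indicator_of_mem (by rw [Set.mem_Icc, ← abs_le]; exact hzT.le)]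
          have h1 := mul_nonneg (by linarith : (0:ℝ) ≤ A) (hcore z hz)
          have h2 := le_abs_self (κ (c * z i0))
          linarith) μ hμ
    refine hub.trans ?_
    have hIN : ∫ u, N u ≤ 2 * c⁻¹ * Gf κ T + 2 * A * (T0 * K 0) := by
      have e1 : ∫ u, N u = (∫ u, (Set.Icc (-T) T).indicator (fun u => |κ (c * u)|) u) +
          A * (2 * (T0 * K 0)) := by
        rw [← hI0, ← integral_const_mul, ← integral_add hi1 (hi0i.const_mul A)]
      rw [e1, integral_indicator measurableSet_Icc, integral_Icc_eq_integral_Ioc,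
        ← intervalIntegral.integral_of_le (by linarith),
        intervalIntegral.integral_comp_mul_left (fun u => |κ u|) hc.ne', smul_eq_mul]
      have e2 : ∫ x in c * -T..c * T, |κ x| = 2 * Gf κ (c * T) := by
        rw [← intervalIntegral.integral_add_adjacent_intervals (Gf_int hκ _ 0) (Gf_int hκ 0 _)]
        have e3 : ∫ x in c * -T..0, |κ x| = ∫ x in (0:ℝ)..c * T, |κ x| := by
          have e4 := intervalIntegral.integral_comp_neg (a := 0) (b := c * T) (fun x => |κ x|)
          rw [neg_zero] at e4
          rw [mul_neg, ← e4]
          refine intervalIntegral.integral_congr fun x _ => ?_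
          change |κ (-x)| = |κ x|
          rw [← hκe (-x), abs_neg, hκe]
        rw [e3, Gf]; ring
      rw [e2]
      have e5 : Gf κ (c * T) ≤ Gf κ T := Gf_mono hκ (by nlinarith)
      have e6 : c⁻¹ * (2 * Gf κ (c * T)) ≤ 2 * c⁻¹ * Gf κ T := by
        have : 0 < c⁻¹ := inv_pos.2 hc
        nlinarith
      linarith
    have hh : 0 ≤ (R * (1 - c) / c)⁻¹ := by
      have : 0 < 1 - c := by linarith
      positivity
    gcongr
  · let Q : ℝ → ℝ := fun u => (Set.Icc T R).indicator (fun u => 1 / 2 * κ u) u -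
      (Set.Icc (-T0) T0).indicator (fun _ => K 0) u
    have hc' : Continuous (fun u => 1 / 2 * κ u) := by fun_prop
    have hm1 : Measurable ((Set.Icc T R).indicator (fun u => 1 / 2 * κ u)) :=
      hc'.measurable.indicator measurableSet_Icc
    have hi1 : Integrable ((Set.Icc T R).indicator (fun u => 1 / 2 * κ u)) :=
      (integrable_indicator_iff measurableSet_Icc).2 (hc'.continuousOn.integrableOn_Icc)
    have hb1 : ∀ u, |(Set.Icc T R).indicator (fun u => 1 / 2 * κ u) u| ≤ K 0 := fun u => by
      by_cases hu : u ∈ Set.Icc T R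
      · rw [Set.indicator_of_mem hu, abs_mul]
        have := hκB u
        have h2 : |(1/2 : ℝ)| = 1/2 := by norm_num
        rw [h2]
        linarith [abs_nonneg (κ u)]
      · rw [Set.indicator_of_notMem hu, abs_zero]; exact hK0
    have hlb := lower_bound hK hpd hsym i0 hi0 R ρ hRp Q (hm1.sub hm0) (K 0 + K 0)
      (fun u => by
        have h1 := abs_le.1 (hb1 u)
        have h2 := hb0 u
        simp only [Q]
        rw [abs_le]; constructor <;> linarith [h1.1, h1.2, h2.1, h2.2])
      (fun u hu => by
        simp only [Q]
        rw [Set.indicator_of_notMem, Set.indicator_of_notMem, sub_zero]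
        · rw [Set.mem_Icc, ← abs_le]; linarith
        · intro h
          rw [abs_of_nonneg (by linarith [h.1])] at hu
          linarith [h.2])
      (fun z hz => by
        simp only [Q]
        by_cases hu : z i0 ∈ Set.Icc T R
        · rw [Set.indicator_of_mem hu]
          have h1 := (hfar z hz (by rw [abs_of_nonneg (by linarith [hu.1])]; exact hu.1)).2
          have h2 := (hb0 (z i0)).1
          linarith
        · rw [Set.indicator_of_notMem hu]
          linarith [hcore z hz]) μ hμ
    refine le_of_eq_of_le ?_ hlb
    congr 1
    have e1 : ∫ u, Q u = (∫ u, (Set.Icc T R).indicator (fun u => 1 / 2 * κ u) u) -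
        (2 * (T0 * K 0)) := by
      rw [← hI0, ← integral_sub hi1 hi0i]
    rw [e1, integral_indicator measurableSet_Icc, integral_Icc_eq_integral_Ioc,
        ← intervalIntegral.integral_of_le hTR, intervalIntegral.integral_const_mul,
        Gf_sub hκ T R]
    have e2 : ∫ t in T..R, |κ t| = ∫ t in T..R, κ t := by
      refine intervalIntegral.integral_congr fun x hx => ?_
      rw [Set.uIcc_of_le hTR] at hx
      exact abs_of_pos (hpos x (by linarith [hx.1]))
    rw [e2]; ring

end PartFive

section PartSix

open Topology

variable {d : ℕ}

lemma zero_mem_seg (R : ℝ) (hR : 0 ≤ R) : (0 : EuclideanSpace ℝ (Fin d)) ∈ segmentSet d R := by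
  intro i
  split_ifs
  · simpa using hR
  · simp

lemma seg_sub_tube (R ρ : ℝ) (hρ : 0 ≤ ρ) : segmentSet d R ⊆ tubeSet d R ρ := by
  intro x hx i
  have h := hx i
  split_ifs with hi
  · rwa [if_pos hi] at h
  · rw [if_neg hi] at h
    rw [h]
    exact ⟨le_rfl, hρ⟩

lemma minE_nonempty (K : EuclideanSpace ℝ (Fin d) → ℝ) (D : Set (EuclideanSpace ℝ (Fin d)))
    (h : (0 : EuclideanSpace ℝ (Fin d)) ∈ D) :
    {e : ℝ | ∃ μ : Measure (EuclideanSpace ℝ (Fin d)),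
      IsProbabilityMeasure μ ∧ μ Dᶜ = 0 ∧ e = energyE K μ}.Nonempty := by
  refine ⟨_, Measure.dirac 0, inferInstance, ?_, rfl⟩
  rw [Measure.dirac_apply]
  simp [h]

/-- The quantitative comparison, for a fixed accuracy `A`. -/
lemma ratio_bound (K : EuclideanSpace ℝ (Fin d) → ℝ) (hK : Continuous K)
    (hpd : IsPosDefKernel K) (hsym : ∀ x, K (-x) = K x) (i0 : Fin d) (hi0 : (i0 : ℕ) = 0)
    (κ : ℝ → ℝ) (hκ : Continuous κ) (hκe : ∀ u, κ |u| = κ u) (hKκ : ∀ z, K z = κ ‖z‖)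
    (A c T1 M T0 : ℝ) (hA : 1 < A) (hc : 0 < c) (hc1 : c < 1) (hT1 : 0 < T1) (hM : 0 < M)
    (hT0 : 0 < T0)
    (hreg : ∀ u ≥ T1, ∀ v, u ≤ v → v ≤ u + u / M → κ (c * u) ≤ A * κ v ∧ κ u ≤ 2 * κ v)
    (hpos : ∀ u ≥ T0, 0 < κ u)
    (r : ℝ → ℝ) (hr0 : ∀ R : ℝ, 0 ≤ r R)
    (hro : Tendsto (fun R => Real.log (max (r R) 2) / Real.log R) atTop (nhds 0))
    (hG : Tendsto (Gf κ) atTop atTop ∧ ∀ T : ℝ → ℝ, (∀ R, 2 ≤ T R) →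
      Tendsto (fun R => Real.log (T R) / Real.log R) atTop (𝓝 0) →
      Tendsto (fun R => Gf κ (T R) / Gf κ R) atTop (𝓝 0)) :
    ∀ᶠ R in atTop, 1 ≤ capacityE K (tubeSet d R (r R)) / capacityE K (segmentSet d R) ∧
      capacityE K (tubeSet d R (r R)) / capacityE K (segmentSet d R) ≤ 2 * A - 1 := by
  set a := max 2 (max T1 T0) with ha
  have ha2 : 2 ≤ a := le_max_left _ _
  have haT1 : T1 ≤ a := (le_max_left _ _).trans (le_max_right _ _)
  have haT0 : T0 ≤ a := (le_max_right _ _).trans (le_max_right _ _)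
  have hMd : 0 ≤ M * d := by positivity
  let T : ℝ → ℝ := fun R => a + (M * d) * r R
  have hTa : ∀ R, a ≤ T R := fun R => by
    have := mul_nonneg hMd (hr0 R)
    simp only [T]
    linarith
  have hlim := hG.2 T (fun R => ha2.trans (hTa R)) (logT r hr0 hro a (M * d) ha2 hMd)
  have h1c : 0 < 1 - c := by linarith
  have hci : 0 < c⁻¹ := inv_pos.2 hc
  set D := c / (1 - c) * (2 * c⁻¹ + 2 * A) with hD
  have hDp : 0 < D := by positivity
  set τ := min (1 / 10) ((A - 1) / (16 * D)) with hτ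
  have hA1 : 0 < A - 1 := by linarith
  have hτp : 0 < τ := by
    rw [hτ]
    exact lt_min (by norm_num) (by positivity)
  have hτ1 : τ ≤ 1 / 10 := min_le_left _ _
  have hτ2 : D * τ ≤ (A - 1) / 16 := by
    have : τ ≤ (A - 1) / (16 * D) := min_le_right _ _
    calc D * τ ≤ D * ((A - 1) / (16 * D)) := by gcongr
      _ = (A - 1) / 16 := by field_simp
  filter_upwards [eventually_ge_atTop T0, hG.1.eventually_ge_atTop 1,
    hG.1.eventually_ge_atTop (T0 * K 0 / τ), hlim.eventually_le_const hτp] with R hR hG1 hG2 hG3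
  have hRp : 0 < R := by linarith
  have hGp : 0 < Gf κ R := by linarith
  rw [div_le_iff₀ hGp] at hG3
  rw [div_le_iff₀ hτp] at hG2
  have hTR : T R ≤ R := by
    by_contra hcon
    push Not at hcon
    have := Gf_mono hκ hcon.le
    nlinarith
  have hTd : M * d * r R ≤ T R := by
    simp only [T]
    linarith
  set g := Gf κ R / R with hg
  have hgp : 0 < g := by positivity
  have key : ∀ μ : Measure (EuclideanSpace ℝ (Fin d)), IsProbabilityMeasure μ →
      μ (tubeSet d R (r R))ᶜ = 0 →
      g / 16 ≤ energyE K μ ∧ minE K (segmentSet d R) ≤ (2 * A - 1) * energyE K μ := by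
    intro μ hμp hμ
    obtain ⟨h1, h2⟩ := main_est K hK hpd hsym i0 hi0 κ hκ hκe hKκ A c T1 M T0 hA hc hc1 hT1 hM
      hT0 hreg hpos R (r R) (T R) hR (hr0 R) (haT1.trans (hTa R)) (haT0.trans (hTa R)) hTd hTR μ hμ
    have h3 : g / 16 ≤ (4 * R)⁻¹ * (1 / 2 * (Gf κ R - Gf κ (T R)) - 2 * (T0 * K 0)) := by
      have : Gf κ R / 4 ≤ 1 / 2 * (Gf κ R - Gf κ (T R)) - 2 * (T0 * K 0) := by nlinarith
      calc g / 16 = (4 * R)⁻¹ * (Gf κ R / 4) := by rw [hg]; field_simp; norm_num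
        _ ≤ _ := by gcongr
    have h4 := h3.trans h2
    refine ⟨h4, h1.trans ?_⟩
    have h5 : (R * (1 - c) / c)⁻¹ * (2 * c⁻¹ * Gf κ (T R) + 2 * A * (T0 * K 0)) ≤ D * τ * g := by
      calc (R * (1 - c) / c)⁻¹ * (2 * c⁻¹ * Gf κ (T R) + 2 * A * (T0 * K 0))
          ≤ (R * (1 - c) / c)⁻¹ * (2 * c⁻¹ * (τ * Gf κ R) + 2 * A * (τ * Gf κ R)) := by
            have q1 : T0 * K 0 ≤ τ * Gf κ R := by linarith
            exact mul_le_mul_of_nonneg_left (add_le_add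
              (mul_le_mul_of_nonneg_left hG3 (by positivity))
              (mul_le_mul_of_nonneg_left q1 (by positivity))) (by positivity)
        _ = D * τ * g := by rw [hD, hg]; field_simp
    have h6 : D * τ * g ≤ (A - 1) / 16 * g := by gcongr
    nlinarith
  have hne := minE_nonempty K _ (seg_sub_tube R (r R) (hr0 R) (zero_mem_seg (d := d) R hRp.le))
  have hnes := minE_nonempty K _ (zero_mem_seg (d := d) R hRp.le)
  have k1 : g / 16 ≤ minE K (tubeSet d R (r R)) := by
    refine le_csInf hne ?_
    rintro _ ⟨μ, hp, hμ, rfl⟩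
    exact (key μ hp hμ).1
  have h2A : 0 < 2 * A - 1 := by linarith
  have k2 : minE K (segmentSet d R) ≤ (2 * A - 1) * minE K (tubeSet d R (r R)) := by
    have : minE K (segmentSet d R) / (2 * A - 1) ≤ minE K (tubeSet d R (r R)) := by
      refine le_csInf hne ?_
      rintro _ ⟨μ, hp, hμ, rfl⟩
      rw [div_le_iff₀ h2A]
      linarith [(key μ hp hμ).2]
    rw [div_le_iff₀ h2A] at this
    linarith
  have k3 : minE K (tubeSet d R (r R)) ≤ minE K (segmentSet d R) := by
    refine csInf_le_csInf (minE_bdd hK hpd hsym _) hnes ?_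
    rintro _ ⟨μ, hp, hμ, rfl⟩
    exact ⟨μ, hp, measure_mono_null
      (Set.compl_subset_compl.2 (seg_sub_tube R (r R) (hr0 R))) hμ, rfl⟩
  have kp : 0 < minE K (tubeSet d R (r R)) := by linarith
  have e : capacityE K (tubeSet d R (r R)) / capacityE K (segmentSet d R) =
      minE K (segmentSet d R) / minE K (tubeSet d R (r R)) := by
    change (minE K (tubeSet d R (r R)))⁻¹ / (minE K (segmentSet d R))⁻¹ = _
    rw [div_inv_eq_mul, mul_comm, div_eq_mul_inv]
  rw [e, le_div_iff₀ kp, div_le_iff₀ kp, one_mul]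
  exact ⟨k3, k2⟩

end PartSix

/-- for `K` continuous isotropic positive definite with regularly varying
radial profile of index `α ∈ [0,1]` (with `K(x) ∼ x⁻¹(log x)^{-γ}`, `γ < 1`, if `α = 1`),
and `r(R) = R^{o(1)}`, one has `Cap_K([0,R] × [0,r(R)]^{d-1}) ∼ Cap_K([0,R] × {0}^{d-1})`
as `R → ∞`. -/
theorem statement10 (d : ℕ) (hd : 2 ≤ d)
    (K : EuclideanSpace ℝ (Fin d) → ℝ) (k : ℝ → ℝ)
    (hcont : Continuous K) (hrad : ∀ x, K x = k ‖x‖) (hpd : IsPosDefKernel K)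
    (α : ℝ) (hα0 : 0 ≤ α) (hα1 : α ≤ 1) (hrv : RegularlyVarying k α)
    (hcrit : α = 1 → ∃ γ : ℝ, γ < 1 ∧
      Tendsto (fun x => k x / (x⁻¹ * Real.log x ^ (-γ))) atTop (nhds 1))
    (r : ℝ → ℝ) (hr0 : ∀ R : ℝ, 0 ≤ r R)
    (hro : Tendsto (fun R => Real.log (max (r R) 2) / Real.log R) atTop (nhds 0)) :
    Tendsto (fun R =>
        capacityE K (tubeSet d R (r R)) / capacityE K (segmentSet d R))
      atTop (nhds 1) := by
  obtain ⟨-, L, hL, hkL⟩ := hrv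
  have hsym : ∀ x, K (-x) = K x := fun x => by rw [hrad, hrad, norm_neg]
  let i0 : Fin d := ⟨0, by omega⟩
  have hi0 : (i0 : ℕ) = 0 := rfl
  have hen : ‖(EuclideanSpace.single i0 (1:ℝ) : EuclideanSpace ℝ (Fin d))‖ = 1 := by simp
  let κ : ℝ → ℝ := fun u => K (u • EuclideanSpace.single i0 (1:ℝ))
  have hκk : ∀ u, κ u = k |u| := fun u => by
    simp only [κ]
    rw [hrad, norm_smul, hen, mul_one, Real.norm_eq_abs]
  have hκ : Continuous κ := hcont.comp (continuous_id.smul continuous_const)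
  have hκe : ∀ u, κ |u| = κ u := fun u => by rw [hκk, hκk, abs_abs]
  have hKκ : ∀ z, K z = κ ‖z‖ := fun z => by rw [hκk, hrad, abs_norm]
  have hB : ∀ u, |κ u| ≤ K 0 := fun u => pd_bound hpd hsym _
  have hκL : Tendsto (fun x => κ x / (x ^ (-α) * L x)) atTop (nhds 1) := by
    refine hkL.congr' ?_
    filter_upwards [eventually_gt_atTop 0] with x hx
    rw [hκk, abs_of_pos hx]
  have hG : Tendsto (Gf κ) atTop atTop ∧ ∀ T : ℝ → ℝ, (∀ R, 2 ≤ T R) →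
      Tendsto (fun R => Real.log (T R) / Real.log R) atTop (nhds 0) →
      Tendsto (fun R => Gf κ (T R) / Gf κ R) atTop (nhds 0) := by
    rcases hα1.lt_or_eq with h | h
    · obtain ⟨b, hb, T, hT, hlow⟩ := rv_lower κ L hκ α h hL hκL
      exact G_case1 hκ (K 0) hB b ((α + 1) / 2) T hb (by linarith) (by linarith) hT hlow
    · obtain ⟨γ, hγ, hg⟩ := hcrit h
      refine G_case2 hκ (K 0) hB γ hγ (hg.congr' ?_)
      filter_upwards [eventually_gt_atTop 0] with x hx
      rw [hκk, abs_of_pos hx]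
  obtain ⟨T0', hT0'⟩ := eventually_atTop.1 (rv_log κ L α hL hκL).1
  have hT0 : (0:ℝ) < max T0' 1 := lt_of_lt_of_le one_pos (le_max_right _ _)
  have hpos : ∀ u ≥ max T0' 1, 0 < κ u := fun u hu => hT0' u ((le_max_left _ _).trans hu)
  rw [Metric.tendsto_nhds]
  intro ε hε
  have hA : 1 < 1 + ε / 4 := by linarith
  obtain ⟨c, hc, hc1, T1, hT1, M, hM, hreg⟩ := rv_main κ L α hα1 hL hκL (1 + ε / 4) hA
  filter_upwards [ratio_bound K hcont hpd hsym i0 hi0 κ hκ hκe hKκ (1 + ε / 4) c T1 M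
    (max T0' 1) hA hc hc1 hT1 hM hT0 hreg hpos r hr0 hro hG] with R hR
  rw [Real.dist_eq, abs_lt]
  constructor <;> linarith [hR.1, hR.2]
end

section
/- Let d ≥ 2 and let K : ℝ^d → ℝ be continuous, isotropic, positive definite, whose radial profile is regularly varying (at infinity) with index α ∈ [0,1]; in the case α = 1 assume moreover K(x) ∼ x^{−1}(log x)^{−γ} as x → ∞ for some γ < 1; assume also that sup_{y ≥ x ≥ r} K(y)/K(x) − 1 → 0 as r → ∞ (automatic when α > 0). Let r(R) → ∞ and s(R) → ∞ be functions with s(R) ≤ r(R) ≤ R and, as R → ∞: if α ∈ [0,1), r(R) = o(R) and r(R) K(s(R)) = o(R K(R)); if α = 1, r(R) = R^{o(1)} and r(R) K(s(R)) (log s(R)) = o(R K(R) (log R)). Then, as R → ∞, Cap_K([0,R] × {0}^{d−1}) ∼ Cap_K(𝒮_{s(R),r(R),R} × {0}^{d−1}), where 𝒮_{s,r,R} = ∪_{1 ≤ i < ⌊R/r⌋} (i r + [0,s]) ⊂ ℝ. -/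
open Filter MeasureTheory Asymptotics

/-- The coarse-grained set `𝒮_{s,r,R} = ∪_{1 ≤ i < ⌊R/r⌋} (i r + [0,s]) ⊂ ℝ`. -/
def condensedSet (s r R : ℝ) : Set ℝ :=
  ⋃ i ∈ Set.Ico 1 (Nat.floor (R / r)), Set.Icc ((i : ℝ) * r) ((i : ℝ) * r + s)

/-- Embedding of a subset of `ℝ` into `ℝ^d` as `S × {0}^{d-1}`. -/
def lineEmbed (d : ℕ) (S : Set ℝ) : Set (EuclideanSpace ℝ (Fin d)) :=
  {x | ∀ i : Fin d, if (i : ℕ) = 0 then x i ∈ S else x i = 0}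



lemma pd_int {Ω : Type*} [MeasurableSpace Ω] (P : Measure Ω) [IsProbabilityMeasure P]
    (F : Ω × Ω → ℝ) (hF : Measurable F) (C : ℝ) (hb : ∀ p, |F p| ≤ C)
    (hpos : ∀ (n : ℕ) (ω : Fin n → Ω), 0 ≤ ∑ i, ∑ j, F (ω i, ω j)) :
    0 ≤ ∫ p, F p ∂(P.prod P) := by
  set B := ∫ p, F p ∂(P.prod P) with hB
  have hBC : |B| ≤ C := by
    have := norm_integral_le_of_norm_le_const (μ := P.prod P) (f := F) (C := C)
      (Eventually.of_forall hb)
    simpa using this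
  have key : ∀ n : ℕ, 0 ≤ (n : ℝ) * n * B + n * (2 * C) := by
    intro n
    let Q : Measure (Fin n → Ω) := Measure.pi fun _ => P
    have hint : ∀ i j, Integrable (fun ω : Fin n → Ω => F (ω i, ω j)) Q := by
      intro i j
      refine Integrable.of_bound (C := C) ?_ (Eventually.of_forall fun ω => hb _)
      exact (hF.comp ((measurable_pi_apply i).prodMk (measurable_pi_apply j))).aestronglyMeasurable
    have h0 : 0 ≤ ∫ ω, ∑ i, ∑ j, F (ω i, ω j) ∂Q := integral_nonneg fun ω => hpos n ω
    rw [integral_finsetSum _ (fun i _ => integrable_finsetSum _ fun j _ => hint i j)] at h0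
    simp_rw [integral_finsetSum _ (fun j _ => hint _ j)] at h0
    have hle : ∀ i j, ∫ ω, F (ω i, ω j) ∂Q ≤ B + if i = j then 2 * C else 0 := by
      intro i j
      by_cases hij : i = j
      · have := norm_integral_le_of_norm_le_const (μ := Q) (f := fun ω => F (ω i, ω j)) (C := C)
          (Eventually.of_forall fun _ => hb _)
        simp only [probReal_univ, mul_one, Real.norm_eq_abs] at this
        rw [if_pos hij]
        have h1 := abs_le.1 this
        have h2 := abs_le.1 hBC
        linarith
      · rw [if_neg hij, add_zero]
        have hind := (ProbabilityTheory.iIndepFun_pi (μ := fun _ : Fin n => P)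
          (X := fun _ => id) (fun _ => aemeasurable_id)).indepFun hij
        have hm := (ProbabilityTheory.indepFun_iff_map_prod_eq_prod_map_map
          (measurable_pi_apply i).aemeasurable (measurable_pi_apply j).aemeasurable).1 hind
        have e1 : ∀ i : Fin n, Q.map (fun ω => ω i) = P := fun i =>
          (measurePreserving_eval (fun _ : Fin n => P) i).map_eq
        have e2 : Q.map (fun ω => (ω i, ω j)) = P.prod P := by
          refine hm.trans ?_
          change (Q.map (fun ω => ω i)).prod (Q.map (fun ω => ω j)) = _
          rw [e1 i, e1 j]
        rw [hB, ← e2, integral_map]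
        · exact ((measurable_pi_apply i).prodMk (measurable_pi_apply j)).aemeasurable
        · exact hF.aestronglyMeasurable
    have := calc (0:ℝ) ≤ _ := h0
      _ ≤ ∑ i : Fin n, ∑ j : Fin n, (B + if i = j then 2 * C else 0) :=
        Finset.sum_le_sum fun i _ => Finset.sum_le_sum fun j _ => hle i j
      _ = (n : ℝ) * n * B + n * (2 * C) := by
        simp [Finset.sum_add_distrib]; ring
    exact this
  by_contra hneg
  push Not at hneg
  obtain ⟨n, hn⟩ := exists_nat_gt (2 * C / (-B))
  have hC : 0 ≤ C := (abs_nonneg B).trans hBC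
  have hn0 : (0:ℝ) < n := lt_of_le_of_lt (by apply div_nonneg <;> linarith) hn
  rw [div_lt_iff₀ (by linarith)] at hn
  have := key n
  nlinarith

/-- continuous even positive definite function on the line -/
structure PDk (κ : ℝ → ℝ) : Prop where
  cont : Continuous κ
  even : ∀ t, κ (-t) = κ t
  pos : ∀ (n : ℕ) (x : Fin n → ℝ) (c : Fin n → ℝ),
    0 ≤ ∑ i : Fin n, ∑ j : Fin n, c i * c j * κ (x i - x j)

noncomputable def en (κ : ℝ → ℝ) (μ ν : Measure ℝ) : ℝ := ∫ x, ∫ y, κ (x - y) ∂ν ∂μ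

namespace PDk

lemma pos' {κ : ℝ → ℝ} (hκ : PDk κ) {ι : Type*} [Fintype ι] (x : ι → ℝ) (c : ι → ℝ) :
    0 ≤ ∑ i, ∑ j, c i * c j * κ (x i - x j) := by
  have e := (Fintype.equivFin ι).symm
  have := hκ.pos (Fintype.card ι) (x ∘ e) (c ∘ e)
  simp only [Function.comp] at this
  rw [← e.sum_comp (fun i => ∑ j, c i * c j * κ (x i - x j))]
  convert this using 2 with i
  rw [← e.sum_comp (fun j => c (e i) * c j * κ (x (e i) - x j))]

lemma zero_nonneg {κ : ℝ → ℝ} (hκ : PDk κ) : 0 ≤ κ 0 := by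
  have := hκ.pos 1 (fun _ => 0) (fun _ => 1)
  simpa using this

lemma bdd {κ : ℝ → ℝ} (hκ : PDk κ) (t : ℝ) : |κ t| ≤ κ 0 := by
  have h1 := hκ.pos 2 ![t, 0] ![1, 1]
  have h2 := hκ.pos 2 ![t, 0] ![1, -1]
  simp [Fin.sum_univ_two, hκ.even] at h1 h2
  rw [abs_le]; constructor <;> linarith

lemma integrable {κ : ℝ → ℝ} (hκ : PDk κ) {Ω : Type*} [MeasurableSpace Ω] (P : Measure Ω) [IsFiniteMeasure P]
    (f : Ω → ℝ) (hf : Measurable f) : Integrable (fun ω => κ (f ω)) P :=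
  Integrable.of_bound (C := κ 0) (hκ.cont.measurable.comp hf).aestronglyMeasurable
    (Eventually.of_forall fun _ => hκ.bdd _)

lemma en_eq_prod {κ : ℝ → ℝ} (hκ : PDk κ) (μ ν : Measure ℝ) [IsFiniteMeasure μ] [IsFiniteMeasure ν] :
    en κ μ ν = ∫ p, κ (p.1 - p.2) ∂(μ.prod ν) := by
  rw [integral_prod]
  · rfl
  · exact hκ.integrable _ _ (by fun_prop)

lemma en_comm {κ : ℝ → ℝ} (hκ : PDk κ) (μ ν : Measure ℝ) [IsFiniteMeasure μ] [IsFiniteMeasure ν] :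
    en κ μ ν = en κ ν μ := by
  rw [hκ.en_eq_prod, hκ.en_eq_prod, ← Measure.prod_swap, integral_map]
  · congr 1; ext p; simp only [Prod.fst_swap, Prod.snd_swap]; rw [← hκ.even]; ring_nf
  · fun_prop
  · exact (hκ.cont.measurable.comp (by fun_prop)).aestronglyMeasurable

lemma quad {κ : ℝ → ℝ} (hκ : PDk κ) (μ ν : Measure ℝ) [IsProbabilityMeasure μ] [IsProbabilityMeasure ν] (t : ℝ) :
    0 ≤ en κ μ μ - 2 * t * en κ μ ν + t ^ 2 * en κ ν ν := by
  set P := μ.prod ν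
  set F : (ℝ × ℝ) × (ℝ × ℝ) → ℝ := fun p => κ (p.1.1 - p.2.1) - t * κ (p.1.1 - p.2.2)
    - t * κ (p.1.2 - p.2.1) + t ^ 2 * κ (p.1.2 - p.2.2) with hF
  have hc := hκ.cont.measurable
  have i1 : Integrable (fun p : (ℝ × ℝ) × (ℝ × ℝ) => κ (p.1.1 - p.2.1)) (P.prod P) :=
    hκ.integrable _ _ (by fun_prop)
  have i2 : Integrable (fun p : (ℝ × ℝ) × (ℝ × ℝ) => κ (p.1.1 - p.2.2)) (P.prod P) :=
    hκ.integrable _ _ (by fun_prop)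
  have i3 : Integrable (fun p : (ℝ × ℝ) × (ℝ × ℝ) => κ (p.1.2 - p.2.1)) (P.prod P) :=
    hκ.integrable _ _ (by fun_prop)
  have i4 : Integrable (fun p : (ℝ × ℝ) × (ℝ × ℝ) => κ (p.1.2 - p.2.2)) (P.prod P) :=
    hκ.integrable _ _ (by fun_prop)
  have h := pd_int P F (by fun_prop) (κ 0 + |t| * κ 0 + |t| * κ 0 + t ^ 2 * κ 0) ?_ ?_
  · have e : ∀ (f g : ℝ × ℝ → ℝ) (a b : Measure ℝ) [IsProbabilityMeasure a]
        [IsProbabilityMeasure b], Measurable f → Measurable g → P.map f = a → P.map g = b →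
        ∫ p : (ℝ × ℝ) × (ℝ × ℝ), κ (f p.1 - g p.2) ∂(P.prod P) = en κ a b := by
      intro f g a b _ _ hf hg ha hb
      rw [hκ.en_eq_prod, ← ha, ← hb, Measure.map_prod_map _ _ hf hg, integral_map]
      · rfl
      · fun_prop
      · exact (hc.comp (by fun_prop)).aestronglyMeasurable
    have m1 : P.map Prod.fst = μ := by simp [P]
    have m2 : P.map Prod.snd = ν := by simp [P]
    have e1 := e Prod.fst Prod.fst μ μ measurable_fst measurable_fst m1 m1
    have e2 := e Prod.fst Prod.snd μ ν measurable_fst measurable_snd m1 m2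
    have e3 := e Prod.snd Prod.fst ν μ measurable_snd measurable_fst m2 m1
    have e4 := e Prod.snd Prod.snd ν ν measurable_snd measurable_snd m2 m2
    simp only [hF] at h
    have j2 : Integrable (fun p : (ℝ × ℝ) × (ℝ × ℝ) => κ (p.1.1 - p.2.1)
      - t * κ (p.1.1 - p.2.2)) (P.prod P) := i1.sub (i2.const_mul t)
    have j3 : Integrable (fun p : (ℝ × ℝ) × (ℝ × ℝ) => κ (p.1.1 - p.2.1)
      - t * κ (p.1.1 - p.2.2) - t * κ (p.1.2 - p.2.1)) (P.prod P) := j2.sub (i3.const_mul t)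
    rw [integral_add j3 (i4.const_mul _), integral_sub j2 (i3.const_mul t),
      integral_sub i1 (i2.const_mul t), integral_const_mul, integral_const_mul,
      integral_const_mul, e1, e2, e3, e4, hκ.en_comm ν μ] at h
    linarith
  · intro p
    have b := hκ.bdd
    simp only [hF]
    have a1 := b (p.1.1 - p.2.1)
    have a2 : |t * κ (p.1.1 - p.2.2)| ≤ |t| * κ 0 := by
      rw [abs_mul]; exact mul_le_mul_of_nonneg_left (b _) (abs_nonneg _)
    have a3 : |t * κ (p.1.2 - p.2.1)| ≤ |t| * κ 0 := by
      rw [abs_mul]; exact mul_le_mul_of_nonneg_left (b _) (abs_nonneg _)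
    have a4 : |t ^ 2 * κ (p.1.2 - p.2.2)| ≤ t ^ 2 * κ 0 := by
      rw [abs_mul, abs_of_nonneg (sq_nonneg t)]
      exact mul_le_mul_of_nonneg_left (b _) (sq_nonneg _)
    rw [abs_le] at *
    constructor <;> linarith [a1.1, a1.2, a2.1, a2.2, a3.1, a3.2, a4.1, a4.2]
  · intro n ω
    have := hκ.pos' (ι := Fin n ⊕ Fin n) (Sum.elim (fun i => (ω i).1) (fun i => (ω i).2))
      (Sum.elim (fun _ => 1) (fun _ => -t))
    simp only [Fintype.sum_sum_type, Sum.elim_inl, Sum.elim_inr, ← Finset.sum_add_distrib] at this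
    refine this.trans_eq ?_
    refine Finset.sum_congr rfl fun i _ => Finset.sum_congr rfl fun j _ => ?_
    simp only [hF]; ring

lemma en_nonneg {κ : ℝ → ℝ} (hκ : PDk κ) (μ : Measure ℝ) [IsProbabilityMeasure μ] : 0 ≤ en κ μ μ := by
  simpa using hκ.quad μ μ 0

lemma en_map {κ : ℝ → ℝ} (hκ : PDk κ) {Ω Ω' : Type*} [MeasurableSpace Ω] [MeasurableSpace Ω'] (P : Measure Ω)
    (Q : Measure Ω') [IsFiniteMeasure P] [IsFiniteMeasure Q]
    (f : Ω → ℝ) (g : Ω' → ℝ) (hf : Measurable f) (hg : Measurable g) :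
    en κ (P.map f) (Q.map g) = ∫ ω, ∫ ω', κ (f ω - g ω') ∂Q ∂P := by
  have hc := hκ.cont.measurable
  unfold en
  rw [integral_map hf.aemeasurable]
  · congr 1; ext ω
    rw [integral_map hg.aemeasurable]
    exact (hc.comp (by fun_prop)).aestronglyMeasurable
  · refine (Measurable.stronglyMeasurable ?_).aestronglyMeasurable
    refine StronglyMeasurable.measurable ?_
    refine StronglyMeasurable.integral_prod_right' (f := fun p : ℝ × ℝ => κ (p.1 - p.2)) ?_
    exact (hc.comp (by fun_prop)).stronglyMeasurable

/-- shifted copies have cross energy at most the self energy -/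
lemma en_shift {κ : ℝ → ℝ} (hκ : PDk κ) (μ : Measure ℝ) [IsProbabilityMeasure μ] (a b : ℝ) :
    ∫ x, ∫ y, κ ((x + a) - (y + b)) ∂μ ∂μ ≤ en κ μ μ := by
  have hm : ∀ a : ℝ, Measurable fun x : ℝ => x + a := fun a => by fun_prop
  have := Measure.isProbabilityMeasure_map (μ := μ) (hm a).aemeasurable
  have := Measure.isProbabilityMeasure_map (μ := μ) (hm b).aemeasurable
  have h := hκ.quad (μ.map (· + a)) (μ.map (· + b)) 1
  rw [hκ.en_map _ _ _ _ (hm a) (hm a), hκ.en_map _ _ _ _ (hm a) (hm b),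
    hκ.en_map _ _ _ _ (hm b) (hm b)] at h
  simp only [add_sub_add_right_eq_sub] at h
  unfold en
  linarith

end PDk


lemma bm {Ω Ω' : Type*} [MeasurableSpace Ω] [MeasurableSpace Ω'] (Q : Measure Ω')
    [IsProbabilityMeasure Q] (F : Ω × Ω' → ℝ) (hF : Measurable F) (C : ℝ)
    (hb : ∀ p, |F p| ≤ C) :
    Measurable (fun ω => ∫ ω', F (ω, ω') ∂Q) ∧ ∀ ω, |∫ ω', F (ω, ω') ∂Q| ≤ C := by
  refine ⟨(StronglyMeasurable.integral_prod_right' hF.stronglyMeasurable).measurable, fun ω => ?_⟩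
  have := norm_integral_le_of_norm_le_const (μ := Q) (f := fun ω' => F (ω, ω')) (C := C)
      (Eventually.of_forall fun _ => hb _)
  simpa using this

lemma bint {Ω : Type*} [MeasurableSpace Ω] (Q : Measure Ω)
    [IsProbabilityMeasure Q] (F : Ω → ℝ) (hF : Measurable F) (C : ℝ)
    (hb : ∀ p, |F p| ≤ C) : Integrable F Q :=
  Integrable.of_bound (C := C) hF.aestronglyMeasurable (Eventually.of_forall hb)

lemma swap4 {Ω Ω' : Type*} [MeasurableSpace Ω] [MeasurableSpace Ω'] (P : Measure Ω)
    (Q : Measure Ω') [IsProbabilityMeasure P] [IsProbabilityMeasure Q]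
    (F : (Ω × Ω') × (Ω × Ω') → ℝ) (hF : Measurable F) (C : ℝ) (hb : ∀ p, |F p| ≤ C) :
    ∫ p, ∫ p', F (p, p') ∂(P.prod Q) ∂(P.prod Q) =
      ∫ x, ∫ y, ∫ u, ∫ v, F ((x, u), (y, v)) ∂Q ∂Q ∂P ∂P := by
  obtain ⟨m1, b1⟩ := bm (P.prod Q) F hF C hb
  rw [integral_prod _ (bint _ _ m1 C b1)]
  congr 1; ext x
  have h1 : ∀ u, ∫ p', F ((x, u), p') ∂(P.prod Q) = ∫ y, ∫ v, F ((x, u), (y, v)) ∂Q ∂P := by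
    intro u
    exact integral_prod _ (bint _ _ (hF.comp (measurable_const.prodMk measurable_id)) C
      (fun p => hb ((x, u), p)))
  simp_rw [h1]
  obtain ⟨m2, b2⟩ := bm (Ω := Ω' × Ω) Q (fun q => F ((x, q.1.1), (q.1.2, q.2)))
    (hF.comp (by fun_prop)) C (fun p => hb _)
  rw [integral_integral_swap]
  exact bint _ _ m2 C b2

noncomputable def unif (h : ℝ) : Measure ℝ :=
  (ENNReal.ofReal h)⁻¹ • volume.restrict (Set.Icc 0 h)

lemma unif_prob {h : ℝ} (hh : 0 < h) : IsProbabilityMeasure (unif h) := by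
  constructor
  simp only [unif, Measure.smul_apply, Measure.restrict_apply_univ, Real.volume_Icc, sub_zero,
    smul_eq_mul]
  exact ENNReal.inv_mul_cancel (by simpa using hh) ENNReal.ofReal_ne_top

lemma unif_integral {h : ℝ} (hh : 0 < h) (f : ℝ → ℝ) :
    ∫ x, f x ∂(unif h) = h⁻¹ * ∫ x in (0:ℝ)..h, f x := by
  rw [unif, integral_smul_measure, intervalIntegral.integral_of_le hh.le,
    integral_Icc_eq_integral_Ioc, ENNReal.toReal_inv, ENNReal.toReal_ofReal hh.le, smul_eq_mul]

lemma unif_compl (h : ℝ) : unif h (Set.Icc 0 h)ᶜ = 0 := by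
  simp [unif, Measure.restrict_apply]

lemma unif_Ioo {h : ℝ} (hh : 0 < h) (x t : ℝ) (ht : 0 ≤ t) :
    (unif h).real (Set.Ioo (x - t) (x + t)) ≤ 2 * t / h := by
  have : unif h (Set.Ioo (x - t) (x + t)) ≤ ENNReal.ofReal (2 * t / h) := by
    simp only [unif, Measure.smul_apply, smul_eq_mul]
    calc _ ≤ (ENNReal.ofReal h)⁻¹ * volume (Set.Ioo (x - t) (x + t)) := by
          gcongr; exact Measure.restrict_le_self
      _ = _ := by
          rw [Real.volume_Ioo, ← ENNReal.ofReal_inv_of_pos hh, ← ENNReal.ofReal_mul (by positivity)]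
          congr 1; ring
  exact ENNReal.toReal_le_of_le_ofReal (by positivity) this

lemma PDk.stage1 {κ : ℝ → ℝ} (hκ : PDk κ) (μ : Measure ℝ) [IsProbabilityMeasure μ] (R h : ℝ)
    (hh : 0 < h) (hμ : μ (Set.Icc 0 R)ᶜ = 0) :
    ∃ ν : Measure ℝ, IsProbabilityMeasure ν ∧ ν (Set.Icc 0 (R + h))ᶜ = 0 ∧
      en κ ν ν ≤ en κ μ μ ∧ ∀ x t : ℝ, 0 ≤ t → ν.real (Set.Ioo (x - t) (x + t)) ≤ 2 * t / h := by
  have := unif_prob hh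
  set U := unif h
  have hc := hκ.cont.measurable
  have hm : Measurable (fun p : ℝ × ℝ => p.2 + p.1) := by fun_prop
  have hP : IsProbabilityMeasure ((U.prod μ).map (fun p => p.2 + p.1)) :=
    Measure.isProbabilityMeasure_map hm.aemeasurable
  refine ⟨(U.prod μ).map (fun p => p.2 + p.1), hP, ?_, ?_, ?_⟩
  · have h1 : ∀ᵐ p ∂(U.prod μ), p.1 ∈ Set.Icc 0 h :=
      Measure.quasiMeasurePreserving_fst.ae (p := fun a => a ∈ Set.Icc 0 h) (unif_compl h)
    have h2 : ∀ᵐ p ∂(U.prod μ), p.2 ∈ Set.Icc 0 R :=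
      Measure.quasiMeasurePreserving_snd.ae (p := fun a => a ∈ Set.Icc 0 R) hμ
    rw [Measure.map_apply hm measurableSet_Icc.compl]
    have h3 : ∀ᵐ p ∂(U.prod μ), p.2 + p.1 ∈ Set.Icc 0 (R + h) := by
      filter_upwards [h1, h2] with p hp hq
      exact ⟨add_nonneg hq.1 hp.1, add_le_add hq.2 hp.2⟩
    exact h3
  · rw [hκ.en_map _ _ _ _ hm hm]
    rw [swap4 U μ (fun p => κ ((p.1.2 + p.1.1) - (p.2.2 + p.2.1)))
      (by fun_prop) (κ 0) (fun _ => hκ.bdd _)]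
    have hB := fun a b => hκ.en_shift μ a b
    obtain ⟨m1, b1⟩ := bm (Ω := (ℝ × ℝ) × ℝ) μ
      (fun q => κ ((q.1.2 + q.1.1.1) - (q.2 + q.1.1.2))) (by fun_prop) (κ 0) (fun _ => hκ.bdd _)
    obtain ⟨m2, b2⟩ := bm (Ω := ℝ × ℝ) μ _ m1 (κ 0) b1
    obtain ⟨m3, b3⟩ := bm (Ω := ℝ) U _ m2 (κ 0) b2
    have inner : ∀ a, ∫ b, ∫ x, ∫ y, κ ((x + a) - (y + b)) ∂μ ∂μ ∂U ≤ en κ μ μ := by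
      intro a
      calc _ ≤ ∫ b, en κ μ μ ∂U := by
            refine integral_mono (bint _ _ ?_ (κ 0) (fun b => b2 (a, b))) (integrable_const _)
              (fun b => hB a b)
            exact m2.comp (measurable_const.prodMk measurable_id)
        _ = _ := by simp
    calc _ ≤ ∫ a, en κ μ μ ∂U :=
          integral_mono (bint _ _ m3 (κ 0) b3) (integrable_const _) inner
      _ = _ := by simp
  · intro x t ht
    have : (U.prod μ).map (fun p => p.2 + p.1) (Set.Ioo (x - t) (x + t)) ≤
        ENNReal.ofReal (2 * t / h) := by
      rw [Measure.map_apply hm measurableSet_Ioo,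
        Measure.prod_apply_symm (hm measurableSet_Ioo)]
      calc _ ≤ ∫⁻ _, ENNReal.ofReal (2 * t / h) ∂μ := by
            refine lintegral_mono fun y => ?_
            have := unif_Ioo hh (x - y) t ht
            rw [measureReal_def] at this
            refine (ENNReal.le_ofReal_iff_toReal_le (measure_ne_top _ _) (by positivity)).2 ?_
            refine le_of_eq_of_le ?_ this
            congr 2
            ext z
            simp only [Set.mem_preimage, Set.mem_Ioo]
            constructor <;> rintro ⟨h1, h2⟩ <;> constructor <;> linarith
        _ = _ := by simp
    exact ENNReal.toReal_le_of_le_ofReal (by positivity) this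

lemma geom {x y u v r s l l' M ρ : ℝ} (hr : 0 < r) (hsr : s ≤ r) (hl : 0 < l)
    (hM : 0 < M) (hlM : 1 / l' ≤ 1 / l - 2 / M) (hρ : ρ = M * r) (hxy : ρ ≤ |x - y|)
    (hu : u ∈ Set.Icc 0 s) (hv : v ∈ Set.Icc 0 s) :
    |x - y| / l' ≤ |((u + (⌊x / (l * r)⌋ + 1) * r) - (v + (⌊y / (l * r)⌋ + 1) * r))| := by
  have hlr : 0 < l * r := mul_pos hl hr
  have a1 := Int.floor_le (x / (l * r))
  have a2 := Int.lt_floor_add_one (x / (l * r))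
  have a3 := Int.floor_le (y / (l * r))
  have a4 := Int.lt_floor_add_one (y / (l * r))
  set m : ℝ := (⌊x / (l * r)⌋ : ℝ)
  set n : ℝ := (⌊y / (l * r)⌋ : ℝ)
  obtain ⟨u1, u2⟩ := hu
  obtain ⟨v1, v2⟩ := hv
  have b1 : |(x - y) / l - (m - n) * r| ≤ r := by
    have e1 : (x - y) / l = (x / (l * r) - y / (l * r)) * r := by field_simp
    rw [e1, ← sub_mul, abs_mul, abs_of_pos hr]
    have : |x / (l * r) - y / (l * r) - (m - n)| ≤ 1 := by
      rw [abs_le]; constructor <;> linarith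
    nlinarith
  have b2 : |u - v| ≤ r := by rw [abs_le]; constructor <;> linarith
  have e2 : |(x - y) / l| = |x - y| / l := by rw [abs_div, abs_of_pos hl]
  have b3 : |x - y| / l - 2 * r ≤ |((u + (m + 1) * r) - (v + (n + 1) * r))| := by
    rw [← e2]
    have := abs_add_le ((u + (m + 1) * r) - (v + (n + 1) * r))
      (((x - y) / l - (m - n) * r) - (u - v))
    have h2 := abs_sub ((x - y) / l - (m - n) * r) (u - v)
    have h3 : (u + (m + 1) * r) - (v + (n + 1) * r) + (((x - y) / l - (m - n) * r) - (u - v))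
      = (x - y) / l := by ring
    rw [h3] at this
    linarith
  refine le_trans ?_ b3
  have h4 : |x - y| * (1 / l') ≤ |x - y| * (1 / l - 2 / M) :=
    mul_le_mul_of_nonneg_left hlM (abs_nonneg _)
  have h5 : 2 * r ≤ |x - y| * (2 / M) := by
    rw [hρ] at hxy
    calc 2 * r = M * r * (2 / M) := by field_simp
      _ ≤ _ := by gcongr
  have h6 : |x - y| / l' = |x - y| * (1 / l') := by ring
  have h7 : |x - y| / l = |x - y| * (1 / l) := by ring
  rw [h6, h7]; linarith

set_option maxHeartbeats 1000000 in
lemma PDk.stage2 {κ : ℝ → ℝ} (hκ : PDk κ) (ν : Measure ℝ) [IsProbabilityMeasure ν]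
    (r s l l' M ρ Θ T b h Y : ℝ) (N : ℕ) (S : Set ℝ)
    (hr : 0 < r) (hs : 0 < s) (hsr : s ≤ r) (hl : 0 < l)
    (hM : 0 < M) (hlM : 1 / l' ≤ 1 / l - 2 / M) (hρ : ρ = M * r) (hΘ : 0 ≤ Θ) (hT0 : 0 ≤ T)
    (hν0 : ν (Set.Icc 0 Y)ᶜ = 0)
    (hν : ∀ x t : ℝ, 0 ≤ t → ν.real (Set.Ioo (x - t) (x + t)) ≤ 2 * t / h)
    (hb : en κ (unif s) (unif s) ≤ b) (hT : ∀ t, T ≤ t → 0 ≤ κ t)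
    (hfar : ∀ t t', ρ ≤ t → t / l' ≤ t' → κ t' ≤ Θ * κ t)
    (hN : Y / (l * r) + 1 < N)
    (hS : S = ⋃ i ∈ Set.Ico 1 N, Set.Icc ((i : ℝ) * r) ((i : ℝ) * r + s)) :
    ∃ μ : Measure ℝ, IsProbabilityMeasure μ ∧ μ Sᶜ = 0 ∧
      en κ μ μ ≤ Θ * en κ ν ν + (b * (2 * ρ) + Θ * (κ 0 * (2 * T))) / h := by
  have hU := unif_prob hs
  set U := unif s with hUdef
  have hc := hκ.cont.measurable
  set g : ℝ × ℝ → ℝ := fun p => p.2 + (⌊p.1 / (l * r)⌋ + 1) * r with hg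
  have hm : Measurable g := by fun_prop
  have hP : IsProbabilityMeasure ((ν.prod U).map g) :=
    Measure.isProbabilityMeasure_map hm.aemeasurable
  have hlr : 0 < l * r := mul_pos hl hr
  have hb0 : 0 ≤ b := (hκ.en_nonneg U).trans hb
  have hρ0 : 0 ≤ ρ := by rw [hρ]; positivity
  refine ⟨_, hP, ?_, ?_⟩
  · have h1 : ∀ᵐ p ∂(ν.prod U), p.1 ∈ Set.Icc 0 Y :=
      Measure.quasiMeasurePreserving_fst.ae (p := fun a => a ∈ Set.Icc 0 Y) hν0
    have h2 : ∀ᵐ p ∂(ν.prod U), p.2 ∈ Set.Icc 0 s :=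
      Measure.quasiMeasurePreserving_snd.ae (p := fun a => a ∈ Set.Icc 0 s) (unif_compl s)
    have hSm : MeasurableSet S := by
      rw [hS]; exact MeasurableSet.biUnion (Set.to_countable _) fun i _ => measurableSet_Icc
    rw [Measure.map_apply hm hSm.compl]
    have h3 : ∀ᵐ p ∂(ν.prod U), g p ∈ S := by
      filter_upwards [h1, h2] with p hp hq
      rw [hS]
      have hf : 0 ≤ ⌊p.1 / (l * r)⌋ := Int.floor_nonneg.2 (div_nonneg hp.1 hlr.le)
      obtain ⟨i, hi⟩ := Int.eq_ofNat_of_zero_le hf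
      simp only [Set.mem_iUnion, exists_prop]
      refine ⟨i + 1, ⟨by omega, ?_⟩, ?_⟩
      · have a1 := Int.floor_le (p.1 / (l * r))
        have a2 : p.1 / (l * r) ≤ Y / (l * r) := by gcongr; exact hp.2
        rw [hi] at a1
        have : ((i + 1 : ℕ) : ℝ) < N := by push_cast at a1 ⊢; linarith
        exact_mod_cast this
      · simp only [hg, hi]
        push_cast
        constructor <;> linarith [hq.1, hq.2]
    exact h3
  · rw [hκ.en_map _ _ _ _ hm hm]
    rw [swap4 ν U (fun p => κ (g p.1 - g p.2)) (by fun_prop) (κ 0) (fun _ => hκ.bdd _)]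
    obtain ⟨m1, b1⟩ := bm (Ω := (ℝ × ℝ) × ℝ) U
      (fun q => κ (g (q.1.1.1, q.1.2) - g (q.1.1.2, q.2))) (by fun_prop) (κ 0) (fun _ => hκ.bdd _)
    obtain ⟨m2, b2⟩ := bm (Ω := ℝ × ℝ) U _ m1 (κ 0) b1
    obtain ⟨m3, b3⟩ := bm (Ω := ℝ) ν _ m2 (κ 0) b2
    set G : ℝ → ℝ → ℝ := fun x y => ∫ u, ∫ v, κ (g (x, u) - g (y, v)) ∂U ∂U with hG
    have mGG : Measurable fun p : ℝ × ℝ => G p.1 p.2 := m2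
    have mG3 : Measurable fun x => ∫ y, G x y ∂ν := m3
    have bG3 : ∀ x, |∫ y, G x y ∂ν| ≤ κ 0 := b3
    have hGb : ∀ x y, G x y ≤ b := fun x y => (hκ.en_shift U
      ((⌊x / (l * r)⌋ + 1) * r) ((⌊y / (l * r)⌋ + 1) * r)).trans hb
    have hae : ∀ᵐ u ∂U, u ∈ Set.Icc 0 s := unif_compl s
    have hGf : ∀ x y, ρ ≤ |x - y| → G x y ≤ Θ * κ (x - y) := by
      intro x y hxy
      have hκabs : ∀ t, κ |t| = κ t := fun t => by
        rcases abs_choice t with h | h <;> rw [h]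
        exact hκ.even t
      have pt : ∀ u ∈ Set.Icc 0 s, ∀ v ∈ Set.Icc 0 s, κ (g (x, u) - g (y, v)) ≤ Θ * κ (x - y) := by
        intro u hu v hv
        have := geom hr hsr hl hM hlM hρ hxy hu hv
        have h2 := hfar _ _ hxy this
        rwa [hκabs, hκabs] at h2
      have in1 : ∀ u ∈ Set.Icc 0 s, ∫ v, κ (g (x, u) - g (y, v)) ∂U ≤ Θ * κ (x - y) := by
        intro u hu
        calc _ ≤ ∫ v, Θ * κ (x - y) ∂U := by
              refine integral_mono_ae (bint _ _ (by fun_prop) (κ 0) (fun _ => hκ.bdd _))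
                (integrable_const _) ?_
              filter_upwards [hae] with v hv using pt u hu v hv
          _ = _ := by simp
      have hmm : Measurable fun u : ℝ => (((x, y), u) : (ℝ × ℝ) × ℝ) :=
        measurable_const.prodMk measurable_id
      have mG : Measurable fun u => ∫ v, κ (g (x, u) - g (y, v)) ∂U := m1.comp hmm
      have bG : ∀ u, |∫ v, κ (g (x, u) - g (y, v)) ∂U| ≤ κ 0 := fun u => b1 ((x, y), u)
      calc _ ≤ ∫ u, Θ * κ (x - y) ∂U := by
            refine integral_mono_ae (bint _ _ mG (κ 0) bG) (integrable_const _) ?_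
            filter_upwards [hae] with u hu using in1 u hu
        _ = _ := by simp
    have bGG : ∀ x y, |G x y| ≤ κ 0 := fun x y => b2 (x, y)
    change ∫ x, ∫ y, G x y ∂ν ∂ν ≤ _
    clear_value G
    have hin : ∀ x, ∫ y, G x y ∂ν ≤ Θ * ∫ y, κ (x - y) ∂ν +
        (b * (2 * ρ) + Θ * (κ 0 * (2 * T))) / h := by
      intro x
      set I1 : ℝ → ℝ := (Set.Ioo (x - ρ) (x + ρ)).indicator 1
      set I2 : ℝ → ℝ := (Set.Ioo (x - T) (x + T)).indicator 1
      have mI : ∀ t : ℝ, ∀ y : ℝ, |x - y| < t ↔ y ∈ Set.Ioo (x - t) (x + t) := by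
        intro t y
        rw [abs_lt, Set.mem_Ioo]
        constructor <;> rintro ⟨h1, h2⟩ <;> constructor <;> linarith
      have iI1 : Integrable I1 ν := (integrable_const (1:ℝ)).indicator measurableSet_Ioo
      have iI2 : Integrable I2 ν := (integrable_const (1:ℝ)).indicator measurableSet_Ioo
      have iκ : Integrable (fun y => κ (x - y)) ν := hκ.integrable _ _ (by fun_prop)
      have hpt : ∀ y, G x y ≤ b * I1 y + Θ * (κ (x - y) + κ 0 * I2 y) := by
        intro y
        have hsecond : 0 ≤ κ (x - y) + κ 0 * I2 y := by
          by_cases hy : |x - y| < T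
          · have : I2 y = 1 := Set.indicator_of_mem ((mI T y).1 hy) _
            rw [this]
            have := (abs_le.1 (hκ.bdd (x - y))).1
            linarith
          · have : I2 y = 0 := Set.indicator_of_notMem (fun hh => hy ((mI T y).2 hh)) _
            rw [this]
            push Not at hy
            have h1 := hT _ hy
            rcases abs_choice (x - y) with h | h <;> rw [h] at h1
            · linarith
            · rw [hκ.even] at h1; linarith
        by_cases hy : |x - y| < ρ
        · have : I1 y = 1 := Set.indicator_of_mem ((mI ρ y).1 hy) _
          rw [this]
          have := mul_nonneg hΘ hsecond
          linarith [hGb x y]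
        · have : I1 y = 0 := Set.indicator_of_notMem (fun hh => hy ((mI ρ y).2 hh)) _
          rw [this]
          push Not at hy
          have h1 := hGf x y hy
          have h2 : 0 ≤ κ 0 * I2 y :=
            mul_nonneg hκ.zero_nonneg (Set.indicator_nonneg (fun _ _ => zero_le_one) _)
          have h3 := mul_nonneg hΘ h2
          linarith
      have e1 : ∫ y, I1 y ∂ν = ν.real (Set.Ioo (x - ρ) (x + ρ)) :=
        integral_indicator_one measurableSet_Ioo
      have e2 : ∫ y, I2 y ∂ν = ν.real (Set.Ioo (x - T) (x + T)) :=
        integral_indicator_one measurableSet_Ioo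
      have iκ2 : Integrable (fun y => κ (x - y) + κ 0 * I2 y) ν := iκ.add (iI2.const_mul _)
      have hmm : Measurable fun y : ℝ => ((x, y) : ℝ × ℝ) := measurable_const.prodMk measurable_id
      have mG : Measurable fun y => G x y := mGG.comp hmm
      have bG : ∀ y, |G x y| ≤ κ 0 := bGG x
      calc _ ≤ ∫ y, (b * I1 y + Θ * (κ (x - y) + κ 0 * I2 y)) ∂ν := by
            exact integral_mono (bint _ _ mG (κ 0) bG)
              ((iI1.const_mul _).add (iκ2.const_mul _)) hpt
        _ = b * ν.real (Set.Ioo (x - ρ) (x + ρ)) + Θ * ((∫ y, κ (x - y) ∂ν) +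
              κ 0 * ν.real (Set.Ioo (x - T) (x + T))) := by
            rw [integral_add (iI1.const_mul _) (iκ2.const_mul _), integral_const_mul,
              integral_const_mul, integral_add iκ (iI2.const_mul _), integral_const_mul, e1, e2]
        _ ≤ b * (2 * ρ / h) + Θ * ((∫ y, κ (x - y) ∂ν) + κ 0 * (2 * T / h)) := by
            have := hκ.zero_nonneg
            gcongr
            · exact hν x ρ hρ0
            · exact hν x T hT0
        _ = _ := by ring
    obtain ⟨m4, b4⟩ := bm (Ω := ℝ) ν (fun p => κ (p.1 - p.2)) (by fun_prop) (κ 0)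
      (fun _ => hκ.bdd _)
    calc _ ≤ ∫ x, (Θ * ∫ y, κ (x - y) ∂ν +
        (b * (2 * ρ) + Θ * (κ 0 * (2 * T))) / h) ∂ν :=
          integral_mono (bint _ _ mG3 (κ 0) bG3)
            (((bint _ _ m4 (κ 0) b4).const_mul _).add (integrable_const _)) hin
      _ = _ := by
          rw [integral_add ((bint _ _ m4 (κ 0) b4).const_mul _) (integrable_const _),
            integral_const_mul]
          simp [en]


noncomputable def Ph (κ : ℝ → ℝ) (x : ℝ) : ℝ := ∫ t in (0:ℝ)..x, κ t

lemma PDk.ii {κ : ℝ → ℝ} (hκ : PDk κ) (a b : ℝ) : IntervalIntegrable κ volume a b :=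
  hκ.cont.intervalIntegrable a b

lemma PDk.Ph_sub {κ : ℝ → ℝ} (hκ : PDk κ) (a b : ℝ) : Ph κ b - Ph κ a = ∫ t in a..b, κ t :=
  intervalIntegral.integral_interval_sub_left (hκ.ii _ _) (hκ.ii _ _)

lemma PDk.Ph_sub_ge {κ : ℝ → ℝ} (hκ : PDk κ) {a b : ℝ} (hab : a ≤ b) :
    - (κ 0 * (b - a)) ≤ Ph κ b - Ph κ a := by
  rw [hκ.Ph_sub]
  have := intervalIntegral.norm_integral_le_of_norm_le_const (a := a) (b := b) (f := κ) (C := κ 0)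
    (fun x _ => hκ.bdd x)
  rw [Real.norm_eq_abs, abs_of_nonneg (sub_nonneg.2 hab)] at this
  exact (abs_le.1 this).1

lemma PDk.Ph_mono {κ : ℝ → ℝ} (hκ : PDk κ) {x0 : ℝ} (hx0 : 0 < x0) (hpos : ∀ x, x0 ≤ x → 0 < κ x)
    {x y : ℝ} (hx : 0 ≤ x) (hxy : x ≤ y) : Ph κ x ≤ Ph κ y + κ 0 * x0 := by
  have h0 := hκ.zero_nonneg
  have mono : ∀ a b, x0 ≤ a → a ≤ b → Ph κ a ≤ Ph κ b := by
    intro a b ha hab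
    rw [← sub_nonneg, hκ.Ph_sub]
    exact intervalIntegral.integral_nonneg hab fun u hu => (hpos u (ha.trans hu.1)).le
  rcases le_total x0 x with h | h
  · have := mono x y h hxy
    nlinarith
  · rcases le_total x0 y with h' | h'
    · have h1 := mono x0 y le_rfl h'
      have h2 := hκ.Ph_sub_ge h
      nlinarith
    · have h2 := hκ.Ph_sub_ge hxy
      nlinarith

lemma PDk.pot {κ : ℝ → ℝ} (hκ : PDk κ) {R : ℝ} (hR : 0 < R) (x : ℝ) :
    ∫ y, κ (x - y) ∂(unif R) = R⁻¹ * (Ph κ x + Ph κ (R - x)) := by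
  rw [unif_integral hR, intervalIntegral.integral_comp_sub_left (fun t => κ t) x]
  have h1 : ∫ t in (0:ℝ)..(R - x), κ t = ∫ t in (x - R)..0, κ t := by
    have := intervalIntegral.integral_comp_neg (f := κ) (a := 0) (b := R - x)
    simp only [hκ.even, neg_sub, neg_zero] at this
    exact this
  rw [Ph, Ph, h1, add_comm, intervalIntegral.integral_add_adjacent_intervals (hκ.ii _ _) (hκ.ii _ _)]
  simp

lemma PDk.en_unif_le {κ : ℝ → ℝ} (hκ : PDk κ) {x0 : ℝ} (hx0 : 0 < x0)
    (hpos : ∀ x, x0 ≤ x → 0 < κ x) {s : ℝ} (hs : 0 < s) :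
    en κ (unif s) (unif s) ≤ s⁻¹ * (2 * (Ph κ s + κ 0 * x0)) := by
  have := unif_prob hs
  have hae : ∀ᵐ u ∂(unif s), u ∈ Set.Icc 0 s := unif_compl s
  obtain ⟨m4, b4⟩ := bm (Ω := ℝ) (unif s) (fun p => κ (p.1 - p.2))
    (hκ.cont.measurable.comp (by fun_prop)) (κ 0) (fun _ => hκ.bdd _)
  calc _ ≤ ∫ x, s⁻¹ * (2 * (Ph κ s + κ 0 * x0)) ∂(unif s) := by
        refine integral_mono_ae (bint _ _ m4 _ b4) (integrable_const _) ?_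
        filter_upwards [hae] with x hx
        rw [hκ.pot hs]
        gcongr
        have h1 := hκ.Ph_mono hx0 hpos hx.1 hx.2
        have h2 := hκ.Ph_mono hx0 hpos (sub_nonneg.2 hx.2) (sub_le_self s hx.1)
        linarith
    _ = _ := by simp

lemma PDk.en_unif_ge {κ : ℝ → ℝ} (hκ : PDk κ) {x0 : ℝ} (hx0 : 0 < x0)
    (hpos : ∀ x, x0 ≤ x → 0 < κ x) {R : ℝ} (hR : 0 < R) (μ : Measure ℝ) [IsProbabilityMeasure μ]
    (hμ : μ (Set.Icc 0 R)ᶜ = 0) :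
    R⁻¹ * (Ph κ (R / 2) - 2 * (κ 0 * x0)) ≤ en κ μ (unif R) := by
  have := unif_prob hR
  have hae : ∀ᵐ u ∂μ, u ∈ Set.Icc 0 R := hμ
  obtain ⟨m4, b4⟩ := bm (Ω := ℝ) (unif R) (fun p => κ (p.1 - p.2))
    (hκ.cont.measurable.comp (by fun_prop)) (κ 0) (fun _ => hκ.bdd _)
  calc _ = ∫ x, R⁻¹ * (Ph κ (R / 2) - 2 * (κ 0 * x0)) ∂μ := by simp
    _ ≤ _ := by
        refine integral_mono_ae (integrable_const _) (bint _ _ m4 _ b4) ?_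
        filter_upwards [hae] with x hx
        rw [hκ.pot hR]
        gcongr
        have hz : Ph κ 0 = 0 := by simp [Ph]
        have h1 := hκ.Ph_mono hx0 hpos le_rfl hx.1
        have h2 := hκ.Ph_mono hx0 hpos le_rfl (sub_nonneg.2 hx.2)
        rw [hz] at h1 h2
        rcases le_total (R / 2) x with h | h
        · have h3 := hκ.Ph_mono hx0 hpos (by positivity) h
          linarith
        · have h3 := hκ.Ph_mono hx0 hpos (x := R / 2) (y := R - x) (by positivity) (by linarith)
          linarith

lemma PDk.Ph_double {κ : ℝ → ℝ} (hκ : PDk κ) {x0 : ℝ} (hx0 : 0 < x0)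
    (hpos : ∀ x, x0 ≤ x → 0 < κ x) (hdec : ∀ x y, x0 ≤ x → x ≤ y → κ y ≤ 2 * κ x)
    {R : ℝ} (hR : 4 * x0 ≤ R) :
    Ph κ R ≤ 5 * Ph κ (R / 2) + 4 * (κ 0 * x0) := by
  have h1 : ∫ t in (R / 2)..R, κ t ≤ ∫ t in (R / 2)..R, 2 * κ (t / 2) := by
    refine intervalIntegral.integral_mono_on (by linarith) (hκ.ii _ _) ?_ ?_
    · exact Continuous.intervalIntegrable (by have := hκ.cont; fun_prop) _ _
    · intro t ht
      exact hdec _ _ (by linarith [ht.1]) (by linarith [ht.1])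
  rw [intervalIntegral.integral_const_mul, intervalIntegral.integral_comp_div κ (by norm_num),
    ← hκ.Ph_sub, ← hκ.Ph_sub] at h1
  have h2 := hκ.Ph_mono hx0 hpos le_rfl (show (0:ℝ) ≤ R / 2 / 2 by linarith)
  have hz : Ph κ 0 = 0 := by simp [Ph]
  simp only [smul_eq_mul] at h1
  linarith

lemma PDk.lower {κ : ℝ → ℝ} (hκ : PDk κ) {x0 : ℝ} (hx0 : 0 < x0)
    (hpos : ∀ x, x0 ≤ x → 0 < κ x) (hdec : ∀ x y, x0 ≤ x → x ≤ y → κ y ≤ 2 * κ x)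
    (hinf : Tendsto (Ph κ) atTop atTop) :
    ∀ᶠ R in atTop, ∀ μ : Measure ℝ, IsProbabilityMeasure μ → μ (Set.Icc 0 R)ᶜ = 0 →
      Ph κ R / (576 * R) ≤ en κ μ μ := by
  filter_upwards [eventually_ge_atTop (4 * x0), hinf.eventually_ge_atTop (84 * (κ 0 * x0))]
    with R hR hPh μ _ hμ
  have hR0 : 0 < R := by linarith
  have := unif_prob hR0
  have h0 : 0 ≤ κ 0 * x0 := mul_nonneg hκ.zero_nonneg hx0.le
  have hq := hκ.quad μ (unif R) (1 / 48)
  have h1 := hκ.en_unif_le hx0 hpos hR0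
  have h2 := hκ.en_unif_ge hx0 hpos hR0 μ hμ
  have h3 := hκ.Ph_double hx0 hpos hdec hR
  have hi : 0 < R⁻¹ := by positivity
  have h4 : en κ (unif R) (unif R) ≤ R⁻¹ * (4 * Ph κ R) :=
    h1.trans (mul_le_mul_of_nonneg_left (by linarith) hi.le)
  have h5 : R⁻¹ * (Ph κ R / 6) ≤ en κ μ (unif R) :=
    le_trans (by gcongr; linarith) h2
  have e : Ph κ R / (576 * R) = R⁻¹ * Ph κ R / 576 := by field_simp
  have h6 : 0 ≤ R⁻¹ * Ph κ R := mul_nonneg hi.le (by linarith)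
  rw [e]
  linarith

lemma main1D {κ : ℝ → ℝ} (hκ : PDk κ) {x0 : ℝ} (hx0 : 0 < x0)
    (hpos : ∀ x, x0 ≤ x → 0 < κ x) (hdec : ∀ x y, x0 ≤ x → x ≤ y → κ y ≤ 2 * κ x)
    (hfar : ∀ Θ : ℝ, 1 < Θ → ∃ l' T : ℝ, 1 < l' ∧ 0 < T ∧
      ∀ t t' : ℝ, T ≤ t → t / l' ≤ t' → κ t' ≤ Θ * κ t)
    (hinf : Tendsto (Ph κ) atTop atTop)
    (r s : ℝ → ℝ) (hr : Tendsto r atTop atTop) (hs : Tendsto s atTop atTop)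
    (hsr : ∀ R : ℝ, 0 < R → s R ≤ r R ∧ r R ≤ R)
    (hro : (fun R => r R) =o[atTop] (fun R : ℝ => R))
    (hD : (fun R => r R * (Ph κ (s R) / s R)) =o[atTop] (Ph κ)) (η : ℝ) (hη : 0 < η) :
    ∀ᶠ R in atTop, ∀ μ : Measure ℝ, IsProbabilityMeasure μ → μ (Set.Icc 0 R)ᶜ = 0 →
      ∃ μ' : Measure ℝ, IsProbabilityMeasure μ' ∧ μ' (condensedSet (s R) (r R) R)ᶜ = 0 ∧
        en κ μ' μ' ≤ (1 + η) * en κ μ μ := by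
  obtain ⟨l', T0, hl', hT0, hf⟩ := hfar (1 + η / 2) (by linarith)
  set Θ := 1 + η / 2 with hΘ
  set T := max T0 x0 with hT
  have hTpos : 0 < T := lt_max_of_lt_left hT0
  set l := (1 + l') / 2 with hl
  have hl1 : 1 < l := by rw [hl]; linarith
  have hll : l < l' := by rw [hl]; linarith
  set ε := (l - 1) / 2 with hε
  have hε0 : 0 < ε := by rw [hε]; linarith
  have hdl : 0 < 1 / l - 1 / l' := by
    rw [sub_pos]; exact one_div_lt_one_div_of_lt (by linarith) hll
  set M := 2 / (1 / l - 1 / l') with hM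
  have hM0 : 0 < M := by positivity
  have hlM : 1 / l' ≤ 1 / l - 2 / M := by
    have : 2 / M = 1 / l - 1 / l' := by rw [hM]; field_simp
    rw [this]; linarith
  have hk0 := hκ.zero_nonneg
  have e1 := hro.bound (show (0:ℝ) < ε / (2 * l) by positivity)
  have e2 := hD.bound (show (0:ℝ) < η * ε / 2304 / (8 * M) by positivity)
  filter_upwards [hκ.lower hx0 hpos hdec hinf, eventually_gt_atTop 0, e1, e2,
    hr.eventually_ge_atTop (T / M), hr.eventually_gt_atTop 0, hs.eventually_gt_atTop 0,
    (hinf.comp hs).eventually_ge_atTop (κ 0 * x0),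
    (hinf.comp hs).eventually_ge_atTop 0, hinf.eventually_ge_atTop 0,
    hinf.eventually_ge_atTop ((2 * Θ * κ 0 * T) / (η * ε / 2304))]
    with R hlow hR hrR hDR hrT hr0 hs0 hPs hPs0 hPR0 hPR μ hμp hμ
  simp only [Function.comp] at hPs hPs0
  have hsr' := hsr R hR
  rw [Real.norm_of_nonneg hr0.le, Real.norm_of_nonneg hR.le] at hrR
  rw [Real.norm_of_nonneg hPR0, Real.norm_of_nonneg (by positivity)] at hDR
  obtain ⟨ν, hνp, hν0, hνe, hνI⟩ := hκ.stage1 μ R (ε * R) (by positivity) hμ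
  have hl0 : 0 < l := by linarith
  have hTr : T ≤ M * r R := by
    have := (div_le_iff₀ hM0).1 hrT; linarith
  have q0 : en κ (unif (s R)) (unif (s R)) ≤ 4 * (Ph κ (s R) / s R) := by
    refine (hκ.en_unif_le hx0 hpos hs0).trans ?_
    calc _ ≤ (s R)⁻¹ * (4 * Ph κ (s R)) := by
          apply mul_le_mul_of_nonneg_left _ (by positivity); linarith
      _ = _ := by ring
  have q1 : ∀ t, T ≤ t → 0 ≤ κ t := by
    intro t ht
    exact (hpos t ((le_max_right _ _).trans ht)).le
  have q2 : ∀ t t', M * r R ≤ t → t / l' ≤ t' → κ t' ≤ Θ * κ t := by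
    intro t t' ht ht'
    exact hf t t' ((le_max_left _ _).trans (hTr.trans ht)) ht'
  have q3 : (R + ε * R) / (l * r R) + 1 < (Nat.floor (R / r R) : ℝ) := by
    have a1 := Nat.lt_floor_add_one (R / r R)
    have a2 : (R + ε * R) / (l * r R) ≤ R / r R - 2 := by
      rw [div_le_iff₀ (by positivity)]
      have : (R / r R - 2) * (l * r R) = l * R - 2 * l * r R := by field_simp
      rw [this]
      have h2 : 2 * l * r R ≤ ε * R := by
        calc 2 * l * r R ≤ 2 * l * (ε / (2 * l) * R) := by gcongr
          _ = _ := by field_simp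
      have h3 : l = 1 + 2 * ε := by rw [hε]; ring
      nlinarith
    linarith
  obtain ⟨μ', p1, p2, p3⟩ := hκ.stage2 ν (r R) (s R) l l' M (M * r R) Θ T
    (4 * (Ph κ (s R) / s R)) (ε * R) (R + ε * R) (Nat.floor (R / r R))
    (condensedSet (s R) (r R) R) hr0 hs0 hsr'.1 hl0 hM0 hlM rfl (by positivity) hTpos.le hν0 hνI
    q0 q1 q2 q3 rfl
  · refine ⟨μ', p1, p2, p3.trans ?_⟩
    have hE := hlow μ hμp hμ
    have g1 : 4 * (Ph κ (s R) / s R) * (2 * (M * r R)) ≤ η * ε / 2304 * Ph κ R := by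
      calc _ = 8 * M * (r R * (Ph κ (s R) / s R)) := by ring
        _ ≤ 8 * M * (η * ε / 2304 / (8 * M) * Ph κ R) := by gcongr
        _ = _ := by field_simp
    have g2 : Θ * (κ 0 * (2 * T)) ≤ η * ε / 2304 * Ph κ R := by
      rw [div_le_iff₀ (by positivity)] at hPR
      linarith
    have g3 : (4 * (Ph κ (s R) / s R) * (2 * (M * r R)) + Θ * (κ 0 * (2 * T))) / (ε * R)
        ≤ η / 2 * en κ μ μ := by
      calc _ ≤ (η * ε / 1152 * Ph κ R) / (ε * R) := by gcongr; linarith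
        _ = η / 2 * (Ph κ R / (576 * R)) := by field_simp; ring
        _ ≤ _ := by gcongr
    have g4 : Θ * en κ ν ν ≤ Θ * en κ μ μ := by gcongr
    rw [hΘ] at g4 g3 ⊢
    linarith

lemma condensed_meas (s r R : ℝ) : MeasurableSet (condensedSet s r R) :=
  MeasurableSet.biUnion (Set.to_countable _) fun _ _ => measurableSet_Icc

lemma condensed_sub {s r R : ℝ} (hr : 0 < r) (hR : 0 < R) (hsr : s ≤ r) :
    condensedSet s r R ⊆ Set.Icc 0 R := by
  intro x hx
  simp only [condensedSet, Set.mem_iUnion, exists_prop] at hx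
  obtain ⟨i, ⟨h1, h2⟩, h3, h4⟩ := hx
  have h5 : ((i + 1 : ℕ) : ℝ) ≤ Nat.floor (R / r) := by exact_mod_cast h2
  have h6 := Nat.floor_le (show 0 ≤ R / r by positivity)
  have h7 : ((i + 1 : ℕ) : ℝ) * r ≤ R := by
    rw [← le_div_iff₀ hr]; linarith
  push_cast at h7
  refine ⟨le_trans (by positivity) h3, ?_⟩
  linarith

section red
variable {d : ℕ}

lemma pd_line (hd : 2 ≤ d) (K : EuclideanSpace ℝ (Fin d) → ℝ) (k : ℝ → ℝ)
    (hcont : Continuous K) (hrad : ∀ x, K x = k ‖x‖) (hpd : IsPosDefKernel K) :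
    PDk (fun t => k |t|) := by
  let i0 : Fin d := ⟨0, by omega⟩
  have h : ∀ t : ℝ, k |t| = K (EuclideanSpace.single i0 t) := by
    intro t; rw [hrad]; simp
  refine ⟨?_, fun t => by simp, ?_⟩
  · simp_rw [h]
    refine hcont.comp ?_
    have : (fun t : ℝ => EuclideanSpace.single i0 t) =
      fun t : ℝ => t • EuclideanSpace.single i0 (1:ℝ) := by
      ext t j; simp
    change Continuous (fun t : ℝ => EuclideanSpace.single i0 t)
    rw [this]; fun_prop
  · intro n x c
    have := hpd n (fun i => EuclideanSpace.single i0 (x i)) c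
    refine this.trans_eq ?_
    refine Finset.sum_congr rfl fun i _ => Finset.sum_congr rfl fun j _ => ?_
    rw [h]
    congr 2
    ext j; by_cases hj : j = i0 <;> simp [hj]

lemma cap_eq (hd : 2 ≤ d) (K : EuclideanSpace ℝ (Fin d) → ℝ) (k : ℝ → ℝ)
    (hcont : Continuous K) (hrad : ∀ x, K x = k ‖x‖) (hpd : IsPosDefKernel K)
    (S : Set ℝ) (hS : MeasurableSet S) :
    capacityE K (lineEmbed d S) = (sInf {e : ℝ | ∃ μ : Measure ℝ,
      IsProbabilityMeasure μ ∧ μ Sᶜ = 0 ∧ e = en (fun t => k |t|) μ μ})⁻¹ := by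
  have hκ := pd_line hd K k hcont hrad hpd
  let i0 : Fin d := ⟨0, by omega⟩
  have h : ∀ t : ℝ, k |t| = K (EuclideanSpace.single i0 t) := by
    intro t; rw [hrad]; simp
  have hpm : Measurable (fun x : EuclideanSpace ℝ (Fin d) => x i0) := by fun_prop
  have hsm : Continuous (fun t : ℝ => EuclideanSpace.single i0 t) := by
    have : (fun t : ℝ => EuclideanSpace.single i0 t) =
      fun t : ℝ => t • EuclideanSpace.single i0 (1:ℝ) := by
      ext t j; simp
    rw [this]; fun_prop
  have hmem : ∀ x ∈ lineEmbed d S, x i0 ∈ S ∧ x = EuclideanSpace.single i0 (x i0) := by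
    intro x hx
    constructor
    · have := hx i0
      simpa [i0] using this
    · ext j
      by_cases hj : j = i0
      · subst hj; simp
      · have h1 := hx j
        have h2 : (j : ℕ) ≠ 0 := fun hh => hj (Fin.ext hh)
        rw [if_neg h2] at h1
        simp [hj, h1]
  have hsub : ∀ a b : ℝ, EuclideanSpace.single i0 a - EuclideanSpace.single i0 b =
      EuclideanSpace.single i0 (a - b) := by
    intro a b; ext j; by_cases hj : j = i0 <;> simp [hj]
  unfold capacityE
  congr 2
  ext e
  constructor
  · rintro ⟨μ, hp, h0, rfl⟩
    have hae : ∀ᵐ x ∂μ, x ∈ lineEmbed d S := h0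
    refine ⟨μ.map (fun x => x i0), Measure.isProbabilityMeasure_map hpm.aemeasurable, ?_, ?_⟩
    · rw [Measure.map_apply hpm hS.compl]
      have : ∀ᵐ x ∂μ, x i0 ∈ S := by
        filter_upwards [hae] with x hx using (hmem x hx).1
      exact this
    · rw [hκ.en_map _ _ _ _ hpm hpm]
      refine integral_congr_ae ?_
      filter_upwards [hae] with x hx
      refine integral_congr_ae ?_
      filter_upwards [hae] with y hy
      rw [h, ← hsub, ← (hmem x hx).2, ← (hmem y hy).2]
  · rintro ⟨μ, hp, h0, rfl⟩
    have hae : ∀ᵐ x ∂μ, x ∈ S := h0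
    have hp2 : IsProbabilityMeasure (μ.map (fun t => EuclideanSpace.single i0 t)) :=
      Measure.isProbabilityMeasure_map hsm.measurable.aemeasurable
    have hin : ∀ t ∈ S, EuclideanSpace.single i0 t ∈ lineEmbed d S := by
      intro t ht j
      by_cases hj : j = i0
      · subst hj; simpa [i0] using ht
      · have h2 : (j : ℕ) ≠ 0 := fun hh => hj (Fin.ext hh)
        rw [if_neg h2]; simp [hj]
    have hLm : MeasurableSet (lineEmbed d S) := by
      have : lineEmbed d S = {x | x i0 ∈ S} ∩ {x | x = EuclideanSpace.single i0 (x i0)} := by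
        ext x
        constructor
        · intro hx; exact hmem x hx
        · rintro ⟨h1, h2⟩
          rw [h2]; exact hin _ h1
      rw [this]
      refine (hpm hS).inter ?_
      exact measurableSet_eq_fun measurable_id (hsm.measurable.comp hpm)
    refine ⟨_, hp2, ?_, ?_⟩
    · rw [Measure.map_apply hsm.measurable hLm.compl]
      have : ∀ᵐ t ∂μ, EuclideanSpace.single i0 t ∈ lineEmbed d S := by
        filter_upwards [hae] with t ht using hin t ht
      exact this
    · unfold energyE en
      rw [integral_map hsm.measurable.aemeasurable]
      · congr 1; ext x
        rw [integral_map hsm.measurable.aemeasurable]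
        · congr 1; ext y
          rw [hsub, ← h]
        · exact Continuous.aestronglyMeasurable (by fun_prop)
      · refine StronglyMeasurable.aestronglyMeasurable ?_
        refine StronglyMeasurable.integral_prod_right'
          (f := fun p : EuclideanSpace ℝ (Fin d) × EuclideanSpace ℝ (Fin d) => K (p.1 - p.2)) ?_
        exact Continuous.stronglyMeasurable (by fun_prop)

end red

lemma kratio {k L : ℝ → ℝ} {α : ℝ} (hL : SlowlyVarying L)
    (hk : Tendsto (fun x => k x / (x ^ (-α) * L x)) atTop (nhds 1)) {a : ℝ} (ha : 0 < a) :
    Tendsto (fun x => k (a * x) / k x) atTop (nhds (a ^ (-α))) := by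
  obtain ⟨_, hLp, hLa⟩ := hL
  have hax : Tendsto (fun x : ℝ => a * x) atTop atTop := tendsto_id.const_mul_atTop ha
  have h1 := hk.comp hax
  have h2 := hk.inv₀ one_ne_zero
  have h3 := ((h1.mul ((hLa a ha).const_mul (a ^ (-α)))).mul h2)
  simp only [one_mul, mul_one, inv_one] at h3
  refine h3.congr' ?_
  filter_upwards [eventually_gt_atTop 0, hk.eventually_ne one_ne_zero] with x hx hne
  have hLx := (hLp x hx).ne'
  have hLax := (hLp (a * x) (by positivity)).ne'
  have hkx : k x ≠ 0 := fun h => hne (by simp [h])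
  have hxp := (Real.rpow_pos_of_pos hx (-α)).ne'
  have hap := (Real.rpow_pos_of_pos ha (-α)).ne'
  simp only [Function.comp]
  rw [Real.mul_rpow ha.le hx.le]
  field_simp

lemma kpos {k L : ℝ → ℝ} {α : ℝ} (hL : SlowlyVarying L)
    (hk : Tendsto (fun x => k x / (x ^ (-α) * L x)) atTop (nhds 1)) :
    ∀ᶠ x in atTop, 0 < k x := by
  filter_upwards [eventually_gt_atTop 0, hk.eventually (lt_mem_nhds zero_lt_one)] with x hx h
  have := mul_pos (Real.rpow_pos_of_pos hx (-α)) (hL.2.1 x hx)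
  exact (div_pos_iff_of_pos_right this).1 h

lemma far_of {k L : ℝ → ℝ} {α : ℝ} (hα1 : α ≤ 1) (hL : SlowlyVarying L)
    (hk : Tendsto (fun x => k x / (x ^ (-α) * L x)) atTop (nhds 1))
    (hratio : ∀ ε : ℝ, 0 < ε → ∃ r₀ : ℝ, ∀ x y : ℝ, r₀ ≤ x → x ≤ y → k y / k x - 1 ≤ ε)
    (Θ : ℝ) (hΘ : 1 < Θ) : ∃ l' T : ℝ, 1 < l' ∧ 0 < T ∧
      ∀ t t' : ℝ, T ≤ t → t / l' ≤ t' → k |t'| ≤ Θ * k |t| := by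
  set a := Real.sqrt Θ with ha
  have ha1 : 1 < a := by rw [ha]; exact Real.lt_sqrt_of_sq_lt (by simpa using hΘ)
  have haa : a * a = Θ := Real.mul_self_sqrt (by linarith)
  set l := (1 + a) / 2 with hl
  have hl1 : 1 < l := by rw [hl]; linarith
  have hla : l < a := by rw [hl]; linarith
  have hl0 : 0 < l := by linarith
  have hlim := kratio hL hk (inv_pos.2 hl0)
  have hlt : (l⁻¹) ^ (-α) < a := by
    rw [Real.inv_rpow hl0.le, Real.rpow_neg hl0.le, inv_inv]
    calc l ^ α ≤ l ^ (1:ℝ) := Real.rpow_le_rpow_of_exponent_le hl1.le hα1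
      _ < a := by simpa using hla
  obtain ⟨r0, hr0⟩ := hratio (a - 1) (by linarith)
  obtain ⟨T1, hT1⟩ := eventually_atTop.1 ((hlim.eventually (gt_mem_nhds hlt)).and (kpos hL hk))
  set T2 := max (max T1 r0) 1
  refine ⟨l, l * T2, hl1, by positivity, ?_⟩
  intro t t' ht ht'
  have hT2 : 1 ≤ T2 := le_max_right _ _
  have hT21 : T1 ≤ T2 := (le_max_left _ _).trans (le_max_left _ _)
  have hT2r : r0 ≤ T2 := (le_max_right _ _).trans (le_max_left _ _)
  have h1 : T2 ≤ t / l := by rw [le_div_iff₀ hl0]; linarith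
  have ht0 : 0 < t := lt_of_lt_of_le (by positivity) ht
  have ht1 : T2 ≤ t := h1.trans (div_le_self ht0.le hl1.le)
  have hp := (hT1 (t / l) (hT21.trans h1)).2
  have hp2 := (hT1 t (hT21.trans ht1))
  have h2 := hr0 (t / l) t' (hT2r.trans h1) ht'
  have h3 : k t' / k (t / l) ≤ a := by linarith
  rw [div_le_iff₀ hp] at h3
  have h4 := hp2.1
  have e : l⁻¹ * t = t / l := by ring
  rw [e, div_lt_iff₀ hp2.2] at h4
  rw [abs_of_pos ht0, abs_of_pos (by linarith : 0 < t'), ← haa]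
  nlinarith

lemma Ph_ge_k {κ : ℝ → ℝ} (hκ : PDk κ) {x0 : ℝ} (hx0 : 0 < x0)
    (hpos : ∀ x, x0 ≤ x → 0 < κ x) (hdec : ∀ x y, x0 ≤ x → x ≤ y → κ y ≤ 2 * κ x)
    {R : ℝ} (hR : 2 * x0 ≤ R) : R * κ R ≤ 4 * (Ph κ R + κ 0 * x0) := by
  have h1 : ∫ t in (R / 2)..R, κ R / 2 ≤ ∫ t in (R / 2)..R, κ t := by
    refine intervalIntegral.integral_mono_on (by linarith) (by simp) (hκ.ii _ _) ?_
    intro t ht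
    have := hdec t R (by linarith [ht.1]) ht.2
    linarith
  rw [← hκ.Ph_sub] at h1
  simp only [intervalIntegral.integral_const, smul_eq_mul] at h1
  have h2 := hκ.Ph_mono hx0 hpos le_rfl (show (0:ℝ) ≤ R / 2 by linarith)
  have hz : Ph κ 0 = 0 := by simp [Ph]
  linarith

/-- consequences of geometric growth of x κ x -/
lemma geo {κ : ℝ → ℝ} (hκ : PDk κ) {x0 : ℝ} (hx0 : 0 < x0)
    (hpos : ∀ x, x0 ≤ x → 0 < κ x) (hdec : ∀ x y, x0 ≤ x → x ≤ y → κ y ≤ 2 * κ x)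
    {q x1 : ℝ} (hq : 1 < q) (hx1 : x0 ≤ x1)
    (hgr : ∀ x, x1 ≤ x → q * (x * κ x) ≤ 2 * x * κ (2 * x)) :
    ∃ A g : ℝ, 0 < A ∧ 0 < g ∧ ∀ x, x1 ≤ x → Ph κ x ≤ A * (x * κ x) ∧ g ≤ x * κ x := by
  have hx10 : 0 < x1 := by linarith
  have hk0 := hκ.zero_nonneg
  have hp2 := hpos (2 * x1) (by linarith)
  set g := x1 * κ (2 * x1) / 2 with hg
  have hg0 : 0 < g := by positivity
  set A := 2 / (q - 1) + κ 0 * (2 * x1) / g with hA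
  have hq1 : 0 < q - 1 := by linarith
  have hA0 : 0 < A := by positivity
  have hA1 : 2 ≤ A * (q - 1) := by
    have : 2 / (q - 1) * (q - 1) = 2 := by field_simp
    have h2 : 0 ≤ κ 0 * (2 * x1) / g * (q - 1) := by positivity
    rw [hA, add_mul]; linarith
  have hA2 : κ 0 * (2 * x1) ≤ A * g := by
    have : κ 0 * (2 * x1) / g * g = κ 0 * (2 * x1) := by field_simp
    have h2 : 0 ≤ 2 / (q - 1) * g := by positivity
    rw [hA, add_mul]; linarith
  refine ⟨A, g, hA0, hg0, ?_⟩
  have key : ∀ n : ℕ, ∀ x, x1 ≤ x → x ≤ 2 ^ n * (2 * x1) → Ph κ x ≤ A * (x * κ x) ∧ g ≤ x * κ x := by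
    intro n
    have base : ∀ x, x1 ≤ x → x ≤ 2 * x1 → Ph κ x ≤ A * (x * κ x) ∧ g ≤ x * κ x := by
      intro x hx hx'
      have h1 : g ≤ x * κ x := by
        have := hdec x (2 * x1) (by linarith) hx'
        have hkx := hpos x (by linarith)
        rw [hg]; nlinarith
      refine ⟨?_, h1⟩
      have h2 : Ph κ x ≤ κ 0 * x := by
        have := intervalIntegral.norm_integral_le_of_norm_le_const (a := 0) (b := x) (f := κ)
          (C := κ 0) (fun x _ => hκ.bdd x)
        rw [Real.norm_eq_abs, sub_zero, abs_of_nonneg (by linarith : 0 ≤ x)] at this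
        exact (abs_le.1 this).2
      calc Ph κ x ≤ κ 0 * (2 * x1) := h2.trans (by gcongr)
        _ ≤ A * g := hA2
        _ ≤ _ := by gcongr
    induction n with
    | zero => simpa using base
    | succ n ih =>
      intro x hx hx'
      rcases le_total x (2 * x1) with h | h
      · exact base x hx h
      · obtain ⟨i1, i2⟩ := ih (x / 2) (by linarith) (by rw [pow_succ] at hx'; linarith)
        have h1 := hgr (x / 2) (by linarith)
        have e : 2 * (x / 2) = x := by ring
        rw [e] at h1
        set y := x / 2
        have h2 : ∫ t in y..x, κ t ≤ ∫ t in y..x, 2 * κ y := by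
          refine intervalIntegral.integral_mono_on (by linarith) (hκ.ii _ _) (by simp) ?_
          intro t ht
          exact hdec y t (by linarith) ht.1
        rw [← hκ.Ph_sub] at h2
        simp only [intervalIntegral.integral_const, smul_eq_mul] at h2
        have e2 : x - y = y := by linarith
        rw [e2] at h2
        have hy0 : 0 < y * κ y := by linarith
        constructor
        · have h3 : Ph κ x ≤ (A + 2) * (y * κ y) := by linarith
          have h4 : (A + 2) * (y * κ y) ≤ (A * q) * (y * κ y) := by gcongr; linarith
          have h5 : A * (q * (y * κ y)) ≤ A * (x * κ x) := by gcongr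
          linarith
        · nlinarith
  intro x hx
  obtain ⟨n, hn⟩ := pow_unbounded_of_one_lt (x / (2 * x1)) (one_lt_two (α := ℝ))
  rw [div_lt_iff₀ (by positivity)] at hn
  exact key n x hx hn.le

lemma Ph_inf {κ : ℝ → ℝ} (hκ : PDk κ) {g x1 : ℝ} (hx1 : 0 < x1) (hg : 0 < g)
    (h : ∀ x, x1 ≤ x → g ≤ x * κ x) : Tendsto (Ph κ) atTop atTop := by
  have h1 : Tendsto (fun x => Ph κ x1 + g * (Real.log x - Real.log x1)) atTop atTop :=
    tendsto_atTop_add_const_left _ _ ((tendsto_atTop_add_const_right _ _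
      Real.tendsto_log_atTop).const_mul_atTop hg)
  refine tendsto_atTop_mono' _ ?_ h1
  filter_upwards [eventually_ge_atTop x1] with x hx
  have hx0 : 0 < x := by linarith
  have h2 : ∫ t in x1..x, g * t⁻¹ ≤ ∫ t in x1..x, κ t := by
    refine intervalIntegral.integral_mono_on hx ?_ (hκ.ii _ _) ?_
    · refine ContinuousOn.intervalIntegrable ?_
      rw [Set.uIcc_of_le hx]
      exact continuousOn_const.mul (continuousOn_inv₀.mono fun t ht => (hx1.trans_le ht.1).ne')
    · intro t ht
      have ht0 : 0 < t := hx1.trans_le ht.1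
      have := h t ht.1
      rw [← div_eq_mul_inv, div_le_iff₀ ht0]; linarith
  rw [intervalIntegral.integral_const_mul, integral_inv_of_pos hx1 hx0, ← hκ.Ph_sub,
    Real.log_div hx0.ne' hx1.ne'] at h2
  linarith

lemma dlog {γ x : ℝ} (hγ : γ < 1) (hx : 1 < x) :
    HasDerivAt (fun x => Real.log x ^ (1 - γ) / (1 - γ)) (x⁻¹ * Real.log x ^ (-γ)) x := by
  have h1 := (Real.hasDerivAt_log (by linarith : x ≠ 0)).rpow_const (p := 1 - γ)
    (Or.inl (Real.log_pos hx).ne')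
  have h2 := h1.div_const (1 - γ)
  have h3 : 1 - γ ≠ 0 := by linarith
  have : 1 - γ - 1 = -γ := by ring
  rw [this] at h2
  have e : x⁻¹ * (1 - γ) * Real.log x ^ (-γ) / (1 - γ) = x⁻¹ * Real.log x ^ (-γ) := by
    field_simp
  rwa [e] at h2

lemma crit {κ : ℝ → ℝ} (hκ : PDk κ) {γ : ℝ} (hγ : γ < 1)
    (hk : Tendsto (fun x => κ x / (x⁻¹ * Real.log x ^ (-γ))) atTop (nhds 1)) :
    Tendsto (Ph κ) atTop atTop ∧ ∃ A : ℝ, 0 < A ∧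
      ∀ᶠ x in atTop, Ph κ x ≤ A * (x * κ x * Real.log x) ∧ x * κ x * Real.log x ≤ A * Ph κ x := by
  set f : ℝ → ℝ := fun x => x⁻¹ * Real.log x ^ (-γ) with hf
  set ψ : ℝ → ℝ := fun x => Real.log x ^ (1 - γ) / (1 - γ) with hψ
  have hγ' : 0 < 1 - γ := by linarith
  have fpos : ∀ x, 1 < x → 0 < f x := fun x hx =>
    mul_pos (by positivity) (Real.rpow_pos_of_pos (Real.log_pos hx) _)
  obtain ⟨X, hX⟩ := eventually_atTop.1 ((hk.eventually (gt_mem_nhds (show (1:ℝ) < 2 by norm_num))).and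
    ((hk.eventually (lt_mem_nhds (show (1/2:ℝ) < 1 by norm_num))).and (eventually_gt_atTop 1)))
  have hb : ∀ x, X ≤ x → 1 < x ∧ κ x ≤ 2 * f x ∧ 1 / 2 * f x ≤ κ x := by
    intro x hx
    obtain ⟨h1, h2, h3⟩ := hX x hx
    have hp := fpos x h3
    rw [div_lt_iff₀ hp] at h1
    rw [lt_div_iff₀ hp] at h2
    exact ⟨h3, h1.le, h2.le⟩
  have hX1 := (hb X le_rfl).1
  have hψt : Tendsto ψ atTop atTop :=
    ((tendsto_rpow_atTop hγ').comp Real.tendsto_log_atTop).atTop_div_const hγ'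
  have fcont : ∀ x, ContinuousOn f (Set.Icc X x) := by
    intro x
    refine ContinuousOn.mul (continuousOn_inv₀.mono fun t ht => ?_) ?_
    · exact (by linarith [ht.1] : (0:ℝ) < t).ne'
    · refine ContinuousOn.rpow_const (Real.continuousOn_log.mono fun t ht => ?_) fun t ht => ?_
      · exact (by linarith [ht.1] : (0:ℝ) < t).ne'
      · exact Or.inl (Real.log_pos (by linarith [ht.1])).ne'
  have fint : ∀ x, X ≤ x → ∫ t in X..x, f t = ψ x - ψ X := by
    intro x hx
    refine intervalIntegral.integral_eq_sub_of_hasDerivAt ?_ ?_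
    · intro t ht
      rw [Set.uIcc_of_le hx] at ht
      exact dlog hγ (by linarith [ht.1])
    · refine ContinuousOn.intervalIntegrable ?_
      rw [Set.uIcc_of_le hx]; exact fcont x
  have fii : ∀ x, X ≤ x → IntervalIntegrable f volume X x := by
    intro x hx
    refine ContinuousOn.intervalIntegrable ?_
    rw [Set.uIcc_of_le hx]; exact fcont x
  have up : ∀ x, X ≤ x → Ph κ x - Ph κ X ≤ 2 * (ψ x - ψ X) := by
    intro x hx
    rw [hκ.Ph_sub, ← fint x hx, ← intervalIntegral.integral_const_mul]
    exact intervalIntegral.integral_mono_on hx (hκ.ii _ _) ((fii x hx).const_mul _)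
      fun t ht => (hb t ht.1).2.1
  have lo : ∀ x, X ≤ x → 1 / 2 * (ψ x - ψ X) ≤ Ph κ x - Ph κ X := by
    intro x hx
    rw [hκ.Ph_sub, ← fint x hx, ← intervalIntegral.integral_const_mul]
    exact intervalIntegral.integral_mono_on hx ((fii x hx).const_mul _) (hκ.ii _ _)
      fun t ht => (hb t ht.1).2.2
  have hrel : ∀ x, 1 < x → x * f x * Real.log x = (1 - γ) * ψ x := by
    intro x hx
    have hlog := Real.log_pos hx
    have : Real.log x ^ (1 - γ) = Real.log x ^ (-γ) * Real.log x := by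
      rw [← Real.rpow_add_one hlog.ne']; congr 1; ring
    simp only [hf, hψ]
    rw [this]; field_simp
  refine ⟨?_, max (6 / (1 - γ)) (6 * (1 - γ)), lt_max_of_lt_left (by positivity), ?_⟩
  · have h1 : Tendsto (fun x => 1 / 2 * (ψ x + (- ψ X)) + Ph κ X) atTop atTop :=
      tendsto_atTop_add_const_right _ _ ((tendsto_atTop_add_const_right _ _
        hψt).const_mul_atTop (by norm_num))
    refine tendsto_atTop_mono' _ ?_ h1
    filter_upwards [eventually_ge_atTop X] with x hx
    have := lo x hx
    linarith
  · filter_upwards [eventually_ge_atTop X, hψt.eventually_ge_atTop (Ph κ X - 2 * ψ X),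
      hψt.eventually_ge_atTop (6 * (1 / 2 * ψ X - Ph κ X)), hψt.eventually_ge_atTop 0]
      with x hx h1 h2 hψ0
    obtain ⟨hx1, hu, hl⟩ := hb x hx
    have hxl : 0 < x * Real.log x := mul_pos (by linarith) (Real.log_pos hx1)
    have u1 := up x hx
    have l1 := lo x hx
    have hr := hrel x hx1
    have a1 : x * κ x * Real.log x ≤ 2 * ((1 - γ) * ψ x) := by
      rw [← hr]
      calc _ = (x * Real.log x) * κ x := by ring
        _ ≤ (x * Real.log x) * (2 * f x) := by gcongr
        _ = _ := by ring
    have a2 : 1 / 2 * ((1 - γ) * ψ x) ≤ x * κ x * Real.log x := by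
      rw [← hr]
      calc _ = (x * Real.log x) * (1 / 2 * f x) := by ring
        _ ≤ (x * Real.log x) * κ x := by gcongr
        _ = _ := by ring
    have a3 : 0 ≤ x * κ x * Real.log x := le_trans (by positivity) a2
    have b1 : Ph κ x ≤ 3 * ψ x := by linarith
    have b2 : ψ x ≤ 3 * Ph κ x := by linarith
    constructor
    · calc Ph κ x ≤ 3 * ψ x := b1
        _ = 6 / (1 - γ) * (1 / 2 * ((1 - γ) * ψ x)) := by field_simp; ring
        _ ≤ 6 / (1 - γ) * (x * κ x * Real.log x) := by gcongr
        _ ≤ _ := by gcongr; exact le_max_left _ _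
    · have : 0 ≤ Ph κ x := by linarith
      calc _ ≤ 2 * ((1 - γ) * ψ x) := a1
        _ ≤ 2 * ((1 - γ) * (3 * Ph κ x)) := by gcongr
        _ = 6 * (1 - γ) * Ph κ x := by ring
        _ ≤ _ := by gcongr; exact le_max_right _ _

lemma D_of {κ : ℝ → ℝ} (w : ℝ → ℝ) {A : ℝ}
    (hinf : Tendsto (Ph κ) atTop atTop)
    (h1 : ∀ᶠ x in atTop, Ph κ x ≤ A * (x * κ x * w x) ∧ x * κ x * w x ≤ A * Ph κ x)
    (hw : ∀ᶠ x in atTop, 0 ≤ x * κ x * w x)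
    (r s : ℝ → ℝ) (hr : Tendsto r atTop atTop) (hs : Tendsto s atTop atTop)
    (h : (fun R => r R * κ (s R) * w (s R)) =o[atTop] (fun R => R * κ R * w R)) :
    (fun R => r R * (Ph κ (s R) / s R)) =o[atTop] (Ph κ) := by
  have o1 : (fun R => r R * (Ph κ (s R) / s R)) =O[atTop]
      (fun R => r R * κ (s R) * w (s R)) := by
    refine IsBigO.of_bound A ?_
    filter_upwards [hs.eventually h1, hs.eventually hw, hs.eventually_gt_atTop 0,
      hr.eventually_gt_atTop 0, (hinf.comp hs).eventually_ge_atTop 0] with R a1 a2 a3 a4 a5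
    simp only [Function.comp] at a5
    rw [Real.norm_of_nonneg (by positivity)]
    have e : r R * κ (s R) * w (s R) = r R / s R * (s R * κ (s R) * w (s R)) := by field_simp
    rw [e, Real.norm_of_nonneg (by positivity)]
    calc _ = r R / s R * Ph κ (s R) := by ring
      _ ≤ r R / s R * (A * (s R * κ (s R) * w (s R))) := by gcongr; exact a1.1
      _ = _ := by ring
  have o2 : (fun R => R * κ R * w R) =O[atTop] Ph κ := by
    refine IsBigO.of_bound A ?_
    filter_upwards [h1, hw, hinf.eventually_ge_atTop 0] with R a1 a2 a3
    rw [Real.norm_of_nonneg a2, Real.norm_of_nonneg a3]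
    exact a1.2
  exact (o1.trans_isLittleO h).trans_isBigO o2

lemma ro_of {r : ℝ → ℝ} (hr : Tendsto r atTop atTop)
    (h : Tendsto (fun R => Real.log (max (r R) 2) / Real.log R) atTop (nhds 0)) :
    (fun R => r R) =o[atTop] (fun R : ℝ => R) := by
  have o1 : (fun R => r R) =O[atTop] (fun R : ℝ => R ^ (1 / 2 : ℝ)) := by
    refine IsBigO.of_bound 1 ?_
    filter_upwards [h.eventually (gt_mem_nhds (show (0:ℝ) < 1 / 2 by norm_num)),
      hr.eventually_ge_atTop 2, eventually_gt_atTop 1] with R h1 h2 h3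
    rw [max_eq_left h2, div_lt_iff₀ (Real.log_pos h3)] at h1
    rw [Real.norm_of_nonneg (by linarith), Real.norm_of_nonneg (by positivity), one_mul,
      Real.rpow_def_of_pos (by linarith), ← Real.log_le_iff_le_exp (by linarith)]
    linarith
  have o2 : (fun R : ℝ => R ^ (1 / 2 : ℝ)) =o[atTop] (fun R : ℝ => R ^ (1:ℝ)) := by
    refine isLittleO_of_tendsto' ?_ ?_
    · filter_upwards [eventually_gt_atTop 0] with R hR h
      exact absurd h (Real.rpow_pos_of_pos hR _).ne'
    · refine (tendsto_rpow_neg_atTop (show (0:ℝ) < 1 / 2 by norm_num)).congr' ?_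
      filter_upwards [eventually_gt_atTop 0] with R hR
      rw [← Real.rpow_sub hR]
      norm_num
  simp only [Real.rpow_one] at o2
  exact o1.trans_isLittleO o2

lemma caps {κ : ℝ → ℝ} (hκ : PDk κ) {x0 : ℝ} (hx0 : 0 < x0)
    (hpos : ∀ x, x0 ≤ x → 0 < κ x) (hdec : ∀ x y, x0 ≤ x → x ≤ y → κ y ≤ 2 * κ x)
    (hinf : Tendsto (Ph κ) atTop atTop) (S : ℝ → Set ℝ) (hS : ∀ᶠ R in atTop, S R ⊆ Set.Icc 0 R)
    (hmain : ∀ η : ℝ, 0 < η → ∀ᶠ R in atTop, ∀ μ : Measure ℝ, IsProbabilityMeasure μ →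
      μ (Set.Icc 0 R)ᶜ = 0 → ∃ μ' : Measure ℝ, IsProbabilityMeasure μ' ∧ μ' (S R)ᶜ = 0 ∧
        en κ μ' μ' ≤ (1 + η) * en κ μ μ) :
    Tendsto (fun R =>
      (sInf {e | ∃ μ : Measure ℝ, IsProbabilityMeasure μ ∧ μ (Set.Icc 0 R)ᶜ = 0 ∧ e = en κ μ μ})⁻¹ /
      (sInf {e | ∃ μ : Measure ℝ, IsProbabilityMeasure μ ∧ μ (S R)ᶜ = 0 ∧ e = en κ μ μ})⁻¹)
      atTop (nhds 1) := by
  rw [Metric.tendsto_nhds]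
  intro ε hε
  filter_upwards [hS, hmain (ε / 2) (by positivity), hκ.lower hx0 hpos hdec hinf,
    hinf.eventually_gt_atTop 0, eventually_gt_atTop 0] with R hSR hm hlow hPh hR
  set A := {e | ∃ μ : Measure ℝ, IsProbabilityMeasure μ ∧ μ (Set.Icc 0 R)ᶜ = 0 ∧ e = en κ μ μ}
  set B := {e | ∃ μ : Measure ℝ, IsProbabilityMeasure μ ∧ μ (S R)ᶜ = 0 ∧ e = en κ μ μ}
  have hAne : A.Nonempty := ⟨_, unif R, unif_prob hR, unif_compl R, rfl⟩
  have hBA : B ⊆ A := by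
    rintro e ⟨μ, h1, h2, h3⟩
    exact ⟨μ, h1, measure_mono_null (Set.compl_subset_compl.2 hSR) h2, h3⟩
  have hBne : B.Nonempty := by
    obtain ⟨μ', h1, h2, _⟩ := hm (unif R) (unif_prob hR) (unif_compl R)
    exact ⟨_, μ', h1, h2, rfl⟩
  have hlb : ∀ e ∈ A, Ph κ R / (576 * R) ≤ e := by
    rintro e ⟨μ, h1, h2, rfl⟩
    exact hlow μ h1 h2
  have hAb : BddBelow A := ⟨_, hlb⟩
  have hBb : BddBelow B := hAb.mono hBA
  have hApos : 0 < sInf A := lt_of_lt_of_le (by positivity) (le_csInf hAne hlb)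
  have h1 : sInf A ≤ sInf B := csInf_le_csInf hAb hBne hBA
  have h2 : sInf B / (1 + ε / 2) ≤ sInf A := by
    refine le_csInf hAne ?_
    rintro e ⟨μ, g1, g2, rfl⟩
    obtain ⟨μ', h1, h2, h3⟩ := hm μ g1 g2
    rw [div_le_iff₀ (by positivity), mul_comm]
    exact (csInf_le hBb ⟨μ', h1, h2, rfl⟩).trans h3
  rw [div_le_iff₀ (by positivity)] at h2
  have e : (sInf A)⁻¹ / (sInf B)⁻¹ = sInf B / sInf A := by
    rw [div_inv_eq_mul, mul_comm, div_eq_mul_inv]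
  rw [e, Real.dist_eq, abs_of_nonneg (by rw [sub_nonneg, le_div_iff₀ hApos]; linarith),
    sub_lt_iff_lt_add, div_lt_iff₀ hApos]
  nlinarith

/-- Condensation: under the stated regular variation and coarse-graining
conditions, `Cap_K([0,R] × {0}^{d-1}) ∼ Cap_K(𝒮_{s(R),r(R),R} × {0}^{d-1})` as `R → ∞`. -/
theorem statement11 (d : ℕ) (hd : 2 ≤ d)
    (K : EuclideanSpace ℝ (Fin d) → ℝ) (k : ℝ → ℝ)
    (hcont : Continuous K) (hrad : ∀ x, K x = k ‖x‖) (hpd : IsPosDefKernel K)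
    (α : ℝ) (hα0 : 0 ≤ α) (hα1 : α ≤ 1) (hrv : RegularlyVarying k α)
    (hcrit : α = 1 → ∃ γ : ℝ, γ < 1 ∧
      Tendsto (fun x => k x / (x⁻¹ * Real.log x ^ (-γ))) atTop (nhds 1))
    (hratio : ∀ ε : ℝ, 0 < ε → ∃ r₀ : ℝ, ∀ x y : ℝ, r₀ ≤ x → x ≤ y →
      k y / k x - 1 ≤ ε)
    (r s : ℝ → ℝ) (hr : Tendsto r atTop atTop) (hs : Tendsto s atTop atTop)
    (hsr : ∀ R : ℝ, 0 < R → s R ≤ r R ∧ r R ≤ R)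
    (hcase0 : α < 1 →
      ((fun R => r R) =o[atTop] (fun R : ℝ => R)) ∧
      ((fun R => r R * k (s R)) =o[atTop] (fun R => R * k R)))
    (hcase1 : α = 1 →
      (Tendsto (fun R => Real.log (max (r R) 2) / Real.log R) atTop (nhds 0)) ∧
      ((fun R => r R * k (s R) * Real.log (s R)) =o[atTop]
        (fun R => R * k R * Real.log R))) :
    Tendsto (fun R =>
        capacityE K (lineEmbed d (Set.Icc 0 R)) /
          capacityE K (lineEmbed d (condensedSet (s R) (r R) R)))
      atTop (nhds 1) := by
  obtain ⟨-, L, hL, hk⟩ := hrv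
  have hκ := pd_line hd K k hcont hrad hpd
  have hκe : ∀ t : ℝ, 0 ≤ t → k |t| = k t := fun t ht => by rw [abs_of_nonneg ht]
  obtain ⟨r0, hr0⟩ := hratio 1 one_pos
  obtain ⟨p0, hp0⟩ := eventually_atTop.1 (kpos hL hk)
  obtain ⟨x0, hx0, hx0r, hx0p⟩ : ∃ x0 : ℝ, 0 < x0 ∧ r0 ≤ x0 ∧ p0 ≤ x0 :=
    ⟨max 1 (max r0 p0), by positivity, (le_max_left _ _).trans (le_max_right _ _),
      (le_max_right _ _).trans (le_max_right _ _)⟩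
  have hpos : ∀ x, x0 ≤ x → 0 < k |x| := fun x hx => by
    rw [hκe x (by linarith)]; exact hp0 x (by linarith)
  have hdec : ∀ x y, x0 ≤ x → x ≤ y → k |y| ≤ 2 * k |x| := fun x y hx hxy => by
    rw [hκe x (by linarith), hκe y (by linarith)]
    have h1 := hr0 x y (by linarith) hxy
    have h2 : k y / k x ≤ 2 := by linarith
    exact (div_le_iff₀ (hp0 x (by linarith))).1 h2
  have hfar := far_of hα1 hL hk hratio
  have hs0 := hs.eventually_gt_atTop 0
  have key : Tendsto (Ph (fun t => k |t|)) atTop atTop ∧ ((fun R => r R) =o[atTop] (fun R : ℝ => R)) ∧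
      (fun R => r R * (Ph (fun t => k |t|) (s R) / s R)) =o[atTop] (Ph (fun t => k |t|)) := by
    rcases hα1.lt_or_eq with hα | hα
    · obtain ⟨c1, c2⟩ := hcase0 hα
      have hlim := (kratio hL hk two_pos).const_mul 2
      have h2 : (1:ℝ) < 2 * 2 ^ (-α) := by
        rw [mul_comm, ← Real.rpow_add_one two_ne_zero]
        exact Real.one_lt_rpow one_lt_two (by linarith)
      obtain ⟨q, hq1, hq2⟩ := exists_between h2
      obtain ⟨X, hX⟩ := eventually_atTop.1 (hlim.eventually (lt_mem_nhds hq2))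
      obtain ⟨A, g, hA, hg, hAg⟩ := geo hκ hx0 hpos hdec (q := q) (x1 := max x0 X) hq1
        (le_max_left _ _) (by
          intro x hx
          have hxx0 : x0 ≤ x := (le_max_left _ _).trans hx
          have h := hX x ((le_max_right _ _).trans hx)
          simp only [hκe x (by linarith), hκe (2 * x) (by linarith)]
          have hp := hp0 x (by linarith)
          rw [← mul_div_assoc, lt_div_iff₀ hp] at h
          have hx0' : 0 ≤ x := by linarith
          nlinarith [mul_le_mul_of_nonneg_left h.le hx0'])
      have hinf := Ph_inf hκ (lt_of_lt_of_le hx0 (le_max_left _ _)) hg fun x hx => (hAg x hx).2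
      refine ⟨hinf, c1, ?_⟩
      refine D_of (fun _ => 1) (A := max A 8) hinf ?_ ?_ r s hr hs ?_
      · filter_upwards [eventually_ge_atTop (max x0 X), eventually_ge_atTop (2 * x0),
          hinf.eventually_ge_atTop (k |0| * x0), hinf.eventually_ge_atTop 0] with x h1 h2 h3 h4
        obtain ⟨a1, a2⟩ := hAg x h1
        have a3 := Ph_ge_k hκ hx0 hpos hdec h2
        simp only [mul_one] at a1 a2 a3 ⊢
        constructor
        · refine a1.trans ?_
          have : 0 ≤ x * k |x| := by linarith
          gcongr
          exact le_max_left _ _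
        · calc _ ≤ 8 * Ph (fun t => k |t|) x := by linarith
            _ ≤ _ := by gcongr; exact le_max_right _ _
      · filter_upwards [eventually_ge_atTop (max x0 X)] with x h1
        have := (hAg x h1).2
        simp only [mul_one] at this ⊢
        linarith
      · refine c2.congr' ?_ ?_
        · filter_upwards [hs0] with R h
          rw [abs_of_pos h, mul_one]
        · filter_upwards [eventually_gt_atTop 0] with R h
          rw [abs_of_pos h, mul_one]
    · obtain ⟨c1, c2⟩ := hcase1 hα
      obtain ⟨γ, hγ, hkγ⟩ := hcrit hα
      obtain ⟨hinf, A, hA, hAx⟩ := crit hκ hγ (hkγ.congr' (by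
        filter_upwards [eventually_gt_atTop 0] with x hx
        rw [abs_of_pos hx]))
      refine ⟨hinf, ro_of hr c1, D_of Real.log (A := A) hinf hAx ?_ r s hr hs ?_⟩
      · filter_upwards [eventually_ge_atTop x0, eventually_ge_atTop 1] with x h1 h2
        have := hpos x h1
        have := Real.log_nonneg h2
        positivity
      · refine c2.congr' ?_ ?_
        · filter_upwards [hs0] with R h
          rw [abs_of_pos h]
        · filter_upwards [eventually_gt_atTop 0] with R h
          rw [abs_of_pos h]
  obtain ⟨hinf, hro, hD⟩ := key
  have hmain := main1D hκ hx0 hpos hdec hfar hinf r s hr hs hsr hro hD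
  have hsub : ∀ᶠ R in atTop, condensedSet (s R) (r R) R ⊆ Set.Icc 0 R := by
    filter_upwards [hr.eventually_gt_atTop 0, eventually_gt_atTop 0] with R h1 h2
    exact condensed_sub h1 h2 (hsr R h2).1
  refine (caps hκ hx0 hpos hdec hinf _ hsub hmain).congr ?_
  intro R
  rw [cap_eq hd K k hcont hrad hpd _ measurableSet_Icc,
    cap_eq hd K k hcont hrad hpd _ (condensed_meas _ _ _)]
end
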